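/- arXiv:2106.14044 — 2 statements merged into one kernel-verified Lean document; each statement's English description precedes it below -/
import Mathlib

section
/- Let M = p_i^{n_i} p_j^{n_j} p_k^{n_k} with p_i, p_j, p_k distinct primes. Assume A ⊕ B = ℤ_M and Φ_M | A. Let Λ be a D(M)-grid such that A ∩ Λ cannot be written as a union of pairwise disjoint M-fibers (each fiber being in any of the three directions). Then A contains diagonal boxes on Λ, i.e., there is a nonempty box P ⊆ Λ whose complementary box P° is nonempty, with P ∪ P° ⊆ A. -/
open Polynomial

/-- The mask polynomial `A(X) = Σ_{a ∈ A} X^a` of a finite subset of `ZMod M`,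
using the representatives in `{0, …, M-1}`. -/
noncomputable def maskPoly (M : ℕ) (A : Finset (ZMod M)) : Polynomial ℤ :=
  ∑ a ∈ A, X ^ a.val

/-- `Φ_s | A` : the `s`-th cyclotomic polynomial divides the mask polynomial of `A` in `ℤ[X]`. -/
def cycDvd (M s : ℕ) (A : Finset (ZMod M)) : Prop :=
  cyclotomic s ℤ ∣ maskPoly M A

/-- `A ⊕ B = ℤ_M` : every element of `ℤ_M` has a unique representation `a + b`
with `a ∈ A` and `b ∈ B`. -/
def IsTiling (M : ℕ) (A B : Set (ZMod M)) : Prop :=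
  ∀ z : ZMod M, ∃! ab : ZMod M × ZMod M, ab.1 ∈ A ∧ ab.2 ∈ B ∧ ab.1 + ab.2 = z

/-- The Coven–Meyerowitz property (T2): whenever `s_1, …, s_m` are prime powers dividing `M`,
powers of pairwise distinct primes, with `Φ_{s_t} | A` for each `t`, then `Φ_{s_1 ⋯ s_m} | A`. -/
def SatisfiesT2 (M : ℕ) (A : Finset (ZMod M)) : Prop :=
  ∀ (P : Finset ℕ) (e : ℕ → ℕ), P.Nonempty →
    (∀ p ∈ P, p.Prime ∧ 1 ≤ e p ∧ p ^ e p ∣ M ∧ cycDvd M (p ^ e p) A) →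
    cycDvd M (∏ p ∈ P, p ^ e p) A

/-- The `D`-grid through `x` in `ZMod M` : `Λ(x, D) = {y : D ∣ y - x}`. -/
def gridSet (M : ℕ) (x : ZMod M) (D : ℕ) : Set (ZMod M) :=
  {y : ZMod M | (D : ZMod M) ∣ (y - x)}

/-- `S` is fibered in the `p` direction on scale `M`: every element of `S` has its whole
fiber `Λ(s, M/p)` contained in `S`. -/
def Fibered (M p : ℕ) (S : Set (ZMod M)) : Prop :=
  ∀ s ∈ S, gridSet M s (M / p) ⊆ S

/-- `Div_N(S)` : the set of values `(s - s', N) = gcd(s - s', N)` for `s, s' ∈ S`. -/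
def DivSet (M N : ℕ) (S : Set (ZMod M)) : Set ℕ :=
  {m : ℕ | ∃ s ∈ S, ∃ s' ∈ S, Nat.gcd (s - s').val N = m}

/-- `P` is a box in the grid `Λ`, with respect to the equivalences `x ∼_ν y ↔ q_ν ∣ x - y`
(`q_ν = p_ν^{n_ν}`): it is contained in `Λ` and closed under taking "coordinatewise
combinations" of its elements. -/
def IsBox (M qi qj qk : ℕ) (Lam P : Set (ZMod M)) : Prop :=
  P ⊆ Lam ∧ ∀ u ∈ P, ∀ v ∈ P, ∀ w ∈ P, ∀ x ∈ Lam,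
    (qi : ZMod M) ∣ (x - u) → (qj : ZMod M) ∣ (x - v) → (qk : ZMod M) ∣ (x - w) → x ∈ P

/-- The complementary box `P°` of `P` in `Λ`: elements of `Λ` which are not equivalent to any
element of `P` in any of the three directions. -/
def compBox (M qi qj qk : ℕ) (Lam P : Set (ZMod M)) : Set (ZMod M) :=
  {x : ZMod M | x ∈ Lam ∧ ∀ u ∈ P,
    ¬ (qi : ZMod M) ∣ (x - u) ∧ ¬ (qj : ZMod M) ∣ (x - u) ∧ ¬ (qk : ZMod M) ∣ (x - u)}

/-!
On a `D(M)`-grid, coordinatized by the subgroups of `ℤ_M` of orders `p_i`, `p_j`, `p_k`, the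
condition `Φ_M ∣ A` says that the alternating sum of the indicator of `A` over the vertices of every
cuboid is zero. Remove as many disjoint fibers from `A ∩ Λ` as possible. If something is left, the
residual set has at least two distinct slices in the third direction, and any two slices differ by
the indicator of a set of rows minus that of a set of columns. Two distinct slices and no third one
give diagonal boxes. Three of them give a cyclic `3 × 3 × 3` pattern, in which any prescribed set of
coordinates is the set of agreements of some pair of points, so that the differences of `A` include
every divisor class of differences within `Λ`. By the theorems of Tijdeman and Sands, the translate
of `A` by a nonzero difference of elements of `B` is then separated from `A` along all lines of some
direction of `Λ`, which makes its trace on `Λ` a union of such lines. The tiling thus splits the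
complement of the residual set in `Λ` into sets, each of them invariant in some direction, and a
cyclic pattern does not allow this.
-/

section Slices

variable {X Y Z : Type*}

/-- The alternating sum of `f` over the vertices of every combinatorial cuboid vanishes. When `f`
is the indicator of a set on the grid, this is what `Φ_M | A` means on a `D(M)`-grid. The terms are
arranged so that all coefficients are positive. -/
def CuboidNull (f : X → Y → Z → ℤ) : Prop :=
  ∀ x x' y y' z z', f x y z + f x' y' z + f x' y z' + f x y' z' =
    f x' y z + f x y' z + f x y z' + f x' y' z'

theorem CuboidNull.rotate {f : X → Y → Z → ℤ} (hf : CuboidNull f) :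
    CuboidNull fun y z x => f x y z := by
  intro y y' z z' x x'
  linarith [hf x x' y y' z z']

theorem CuboidNull.swap {f : X → Y → Z → ℤ} (hf : CuboidNull f) :
    CuboidNull fun y x z => f x y z := by
  intro y y' x x' z z'
  linarith [hf x x' y y' z z']

/-- The function `f` is the indicator of a cuboid-null set containing no line in any of the three
directions. -/
structure IsLineFreeNull (f : X → Y → Z → ℤ) : Prop where
  zero_or_one : ∀ x y z, f x y z = 0 ∨ f x y z = 1
  cuboidNull : CuboidNull f
  exists_zero_x : ∀ y z, ∃ x, f x y z = 0
  exists_zero_y : ∀ x z, ∃ y, f x y z = 0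
  exists_zero_z : ∀ x y, ∃ z, f x y z = 0

theorem IsLineFreeNull.rotate {f : X → Y → Z → ℤ} (hf : IsLineFreeNull f) :
    IsLineFreeNull fun y z x => f x y z where
  zero_or_one y z x := hf.zero_or_one x y z
  cuboidNull := hf.cuboidNull.rotate
  exists_zero_x z x := hf.exists_zero_y x z
  exists_zero_y y x := hf.exists_zero_z x y
  exists_zero_z y z := hf.exists_zero_x y z

theorem IsLineFreeNull.swap {f : X → Y → Z → ℤ} (hf : IsLineFreeNull f) :
    IsLineFreeNull fun y x z => f x y z where
  zero_or_one y x z := hf.zero_or_one x y z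
  cuboidNull := hf.cuboidNull.swap
  exists_zero_x x z := hf.exists_zero_y x z
  exists_zero_y y z := hf.exists_zero_x y z
  exists_zero_z y x := hf.exists_zero_z x y

/-- The function `α` is the indicator of a nonempty proper subset. -/
structure IsProperIndicator (α : X → ℤ) : Prop where
  zero_or_one : ∀ x, α x = 0 ∨ α x = 1
  exists_zero : ∃ x, α x = 0
  exists_one : ∃ x, α x = 1

theorem IsProperIndicator.one_sub {α : X → ℤ} (hα : IsProperIndicator α) :
    IsProperIndicator fun x => 1 - α x where
  zero_or_one x := by grind [hα.zero_or_one x]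
  exists_zero := hα.exists_one.imp fun x hx => by rw [hx, sub_self]
  exists_one := hα.exists_zero.imp fun x hx => by rw [hx, sub_zero]

theorem exists_properIndicator_sub_of_eq_one {g : X → Y → ℤ}
    (hg : ∀ x x' y y', g x y + g x' y' = g x' y + g x y') (hbound : ∀ x y, -1 ≤ g x y ∧ g x y ≤ 1)
    (hrow : ∀ x, ∃ y, g x y ≤ 0) (hcol : ∀ y, ∃ x, g x y ≤ 0) {x₁ : X} {y₁ : Y}
    (h₁ : g x₁ y₁ = 1) :
    ∃ α β, IsProperIndicator α ∧ IsProperIndicator β ∧ ∀ x y, g x y = α x - β y := by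
  obtain ⟨x₀, hx₀⟩ := hcol y₁
  obtain ⟨y₀, hy₀⟩ := hrow x₁
  have h₀ := hg x₀ x₁ y₀ y₁
  refine ⟨fun x => g x y₁, fun y => 1 - g x₁ y, ⟨fun x => ?_, ⟨x₀, ?_⟩, ⟨x₁, h₁⟩⟩,
    ⟨fun y => ?_, ⟨y₁, ?_⟩, ⟨y₀, ?_⟩⟩, fun x y => ?_⟩
  · grind
  · grind
  · grind
  · grind
  · grind
  · linarith [hg x x₁ y y₁]

theorem exists_properIndicator_sub {g : X → Y → ℤ}
    (hg : ∀ x x' y y', g x y + g x' y' = g x' y + g x y') (hbound : ∀ x y, -1 ≤ g x y ∧ g x y ≤ 1)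
    (hrow : ∀ x, (∃ y, g x y ≤ 0) ∧ ∃ y, 0 ≤ g x y) (hcol : ∀ y, (∃ x, g x y ≤ 0) ∧ ∃ x, 0 ≤ g x y)
    (hne : ∃ x y, g x y ≠ 0) :
    ∃ α β, IsProperIndicator α ∧ IsProperIndicator β ∧ ∀ x y, g x y = α x - β y := by
  obtain ⟨x₁, y₁, h₁⟩ := hne
  rcases (by grind : g x₁ y₁ = 1 ∨ -g x₁ y₁ = 1) with h₁ | h₁
  · exact exists_properIndicator_sub_of_eq_one hg hbound (fun x => (hrow x).1)
      (fun y => (hcol y).1) h₁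
  · obtain ⟨α, β, hα, hβ, h⟩ := exists_properIndicator_sub_of_eq_one (g := fun x y => -g x y)
      (fun x x' y y' => by linarith [hg x x' y y']) (fun x y => by grind)
      (fun x => by simpa using (hrow x).2) (fun y => by simpa using (hcol y).2) h₁
    exact ⟨_, _, hα.one_sub, hβ.one_sub, fun x y => by linarith [h x y]⟩

theorem IsLineFreeNull.exists_slice_sub_eq {f : X → Y → Z → ℤ} (hf : IsLineFreeNull f) {z z' : Z}
    (hne : ∃ x y, f x y z ≠ f x y z') :
    ∃ α β, IsProperIndicator α ∧ IsProperIndicator β ∧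
      ∀ x y, f x y z - f x y z' = α x - β y := by
  refine exists_properIndicator_sub (fun x x' y y' => ?_) (fun x y => ?_) (fun x => ?_)
    (fun y => ?_) (by simpa only [sub_ne_zero] using hne)
  · linarith [hf.cuboidNull x x' y y' z z']
  · grind [hf.zero_or_one x y z, hf.zero_or_one x y z']
  · constructor
    · obtain ⟨y, hy⟩ := hf.exists_zero_y x z
      exact ⟨y, by grind [hf.zero_or_one x y z']⟩
    · obtain ⟨y, hy⟩ := hf.exists_zero_y x z'
      exact ⟨y, by grind [hf.zero_or_one x y z]⟩
  · constructor
    · obtain ⟨x, hx⟩ := hf.exists_zero_x y z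
      exact ⟨x, by grind [hf.zero_or_one x y z']⟩
    · obtain ⟨x, hx⟩ := hf.exists_zero_x y z'
      exact ⟨x, by grind [hf.zero_or_one x y z]⟩

/-- The set `S` contains a combinatorial box together with its complementary box, both nonempty. -/
def HasDiagonalBoxes (S : Set (X × Y × Z)) : Prop :=
  ∃ (I : Set X) (J : Set Y) (K : Set Z), I.Nonempty ∧ J.Nonempty ∧ K.Nonempty ∧
    Iᶜ.Nonempty ∧ Jᶜ.Nonempty ∧ Kᶜ.Nonempty ∧ I ×ˢ J ×ˢ K ⊆ S ∧ Iᶜ ×ˢ Jᶜ ×ˢ Kᶜ ⊆ S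

theorem HasDiagonalBoxes.mono {S T : Set (X × Y × Z)} (hS : HasDiagonalBoxes S) (hST : S ⊆ T) :
    HasDiagonalBoxes T := by
  obtain ⟨I, J, K, hI, hJ, hK, hI', hJ', hK', hbox, hbox'⟩ := hS
  exact ⟨I, J, K, hI, hJ, hK, hI', hJ', hK', hbox.trans hST, hbox'.trans hST⟩

theorem IsLineFreeNull.hasDiagonalBoxes_of_two_slices {f : X → Y → Z → ℤ} (hf : IsLineFreeNull f)
    {z₀ z₁ : Z} (hne : ∃ x y, f x y z₁ ≠ f x y z₀)
    (htwo : ∀ z, (∀ x y, f x y z = f x y z₀) ∨ ∀ x y, f x y z = f x y z₁) :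
    HasDiagonalBoxes {p : X × Y × Z | f p.1 p.2.1 p.2.2 = 1} := by
  obtain ⟨α, β, hα, hβ, h⟩ := hf.exists_slice_sub_eq hne
  have h₁ : ∀ x y, α x = 1 → β y = 0 → f x y z₁ = 1 := fun x y hx hy => by
    grind [h x y, hf.zero_or_one x y z₀, hf.zero_or_one x y z₁]
  have h₀ : ∀ x y, α x = 0 → β y = 1 → f x y z₀ = 1 := fun x y hx hy => by
    grind [h x y, hf.zero_or_one x y z₀, hf.zero_or_one x y z₁]
  refine ⟨{x | α x = 1}, {y | β y = 0}, {z | ∀ x y, f x y z = f x y z₁}, hα.exists_one,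
    hβ.exists_zero, ⟨z₁, fun _ _ => rfl⟩, ?_, ?_, ⟨z₀, fun h => ?_⟩, ?_, ?_⟩
  · exact hα.exists_zero.imp fun x hx h => by simp_all
  · exact hβ.exists_one.imp fun y hy h => by simp_all
  · obtain ⟨x, y, hxy⟩ := hne
    exact hxy (h x y).symm
  · rintro ⟨x, y, z⟩ ⟨hx, hy, hz⟩
    exact (hz x y).trans (h₁ x y hx hy)
  · rintro ⟨x, y, z⟩ ⟨hx, hy, hz⟩
    have hx : α x = 0 := (hα.zero_or_one x).resolve_right hx
    have hy : β y = 1 := (hβ.zero_or_one y).resolve_left hy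
    exact ((htwo z).resolve_right hz x y).trans (h₀ x y hx hy)

end Slices

section CyclicPattern

variable {X Y Z : Type*} {f : X → Y → Z → ℤ}

/-- The restriction of `f` to three points on each axis is a cyclic pattern: passing from the
slice `z (c - 1)` to the slice `z c` adds the row `x c` and removes the column `y c`. -/
def IsCyclicPattern (f : X → Y → Z → ℤ) (x : Fin 3 → X) (y : Fin 3 → Y) (z : Fin 3 → Z) : Prop :=
  ∀ a b c, f (x a) (y b) (z c) - f (x a) (y b) (z (c - 1)) =
    (if a = c then 1 else 0) - if b = c then 1 else 0

theorem eq_ite_of_sum_eq_one {ι : Type*} [Fintype ι] [DecidableEq ι] {γ : ι → ℤ}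
    (hγ : ∀ i, 0 ≤ γ i) (hsum : ∑ i, γ i = 1) {a : ι} (ha : γ a = 1) (c : ι) :
    γ c = if a = c then 1 else 0 := by
  have hrest : ∑ i ∈ Finset.univ.erase a, γ i = 0 := by
    linarith [Finset.add_sum_erase _ γ (Finset.mem_univ a)]
  split_ifs with hac
  · rw [← hac, ha]
  · exact (Finset.sum_eq_zero_iff_of_nonneg fun i _ => hγ i).mp hrest c (by simp [Ne.symm hac])

theorem IsProperIndicator.nonneg {α : X → ℤ} (hα : IsProperIndicator α) (x : X) : 0 ≤ α x := by
  rcases hα.zero_or_one x with h | h <;> simp [h]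

theorem exists_isCyclicPattern_of_sum_eq_one {z : Fin 3 → Z} {α : Fin 3 → X → ℤ}
    {β : Fin 3 → Y → ℤ} (hα : ∀ c, IsProperIndicator (α c)) (hβ : ∀ c, IsProperIndicator (β c))
    (hαβ : ∀ c x y, f x y (z c) - f x y (z (c - 1)) = α c x - β c y)
    (hsumα : ∀ x, ∑ c, α c x = 1) (hsumβ : ∀ y, ∑ c, β c y = 1) :
    ∃ x y, IsCyclicPattern f x y z := by
  choose x hx using fun c => (hα c).exists_one
  choose y hy using fun c => (hβ c).exists_one
  refine ⟨x, y, fun a b c => ?_⟩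
  rw [hαβ, eq_ite_of_sum_eq_one (fun i => (hα i).nonneg (x a)) (hsumα _) (hx a) c,
    eq_ite_of_sum_eq_one (fun i => (hβ i).nonneg (y b)) (hsumβ _) (hy b) c]

/-- The three differences of consecutive slices add up to zero, so the row sums `∑ c, α c x` and the
column sums `∑ c, β c y` are one common constant, `1` or `2`. Traversing the three slices in the
opposite direction exchanges the two values. -/
theorem IsLineFreeNull.exists_isCyclicPattern_of_slices_ne (hf : IsLineFreeNull f) (z : Fin 3 → Z)
    (hz : ∀ c, ∃ x y, f x y (z c) ≠ f x y (z (c - 1))) :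
    ∃ (x : Fin 3 → X) (y : Fin 3 → Y) (z : Fin 3 → Z), IsCyclicPattern f x y z := by
  choose α β hα hβ hαβ using fun c => hf.exists_slice_sub_eq (hz c)
  have hsum (x : X) (y : Y) : ∑ c, α c x = ∑ c, β c y := by
    rw [← sub_eq_zero, ← Finset.sum_sub_distrib]
    simp only [← hαβ, Finset.sum_sub_distrib]
    exact sub_eq_zero.mpr (Equiv.sum_comp (Equiv.subRight 1) fun c => f x y (z c)).symm
  obtain ⟨x₀, hx₀⟩ := (hα 0).exists_zero
  obtain ⟨x₁, hx₁⟩ := (hα 0).exists_one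
  obtain ⟨y₀, -⟩ := (hβ 0).exists_zero
  have hconst (x : X) : ∑ c, α c x = ∑ c, α c x₀ := by rw [hsum x y₀, hsum x₀ y₀]
  have hvalue : ∑ c, α c x₀ = 1 ∨ ∑ c, α c x₀ = 2 := by
    have h := hconst x₁
    simp only [Fin.sum_univ_three] at h ⊢
    have h01 := fun c => (hα c).zero_or_one
    grind [h01 1 x₀, h01 2 x₀, h01 1 x₁, h01 2 x₁]
  rcases hvalue with h₁ | h₂
  · obtain ⟨x, y, h⟩ := exists_isCyclicPattern_of_sum_eq_one hα hβ hαβ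
      (fun x => (hconst x).trans h₁) (fun y => (hsum x₀ y).symm.trans h₁)
    exact ⟨x, y, z, h⟩
  · have hcompl {γ : Fin 3 → ℤ} (h : ∑ c, γ c = 2) : ∑ c, (1 - γ (1 - c)) = 1 := by
      refine (Equiv.sum_comp (Equiv.subLeft 1) fun c => 1 - γ c).trans ?_
      simp [Finset.sum_sub_distrib, h]
    obtain ⟨x, y, h⟩ := exists_isCyclicPattern_of_sum_eq_one (z := fun c => z (-c))
      (fun c => (hα (1 - c)).one_sub) (fun c => (hβ (1 - c)).one_sub)
      (fun c x y => by
        have h := hαβ (1 - c) x y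
        rw [sub_sub_cancel_left] at h
        rw [neg_sub]
        linarith)
      (fun x => hcompl ((hconst x).trans h₂)) (fun y => hcompl ((hsum x₀ y).symm.trans h₂))
    exact ⟨x, y, _, h⟩

theorem IsLineFreeNull.hasDiagonalBoxes_or_exists_isCyclicPattern (hf : IsLineFreeNull f)
    (hne : ∃ x y z, f x y z = 1) :
    HasDiagonalBoxes {p : X × Y × Z | f p.1 p.2.1 p.2.2 = 1} ∨
      ∃ (x : Fin 3 → X) (y : Fin 3 → Y) (z : Fin 3 → Z), IsCyclicPattern f x y z := by
  obtain ⟨x, y, z₁, h₁⟩ := hne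
  obtain ⟨z₀, h₀⟩ := hf.exists_zero_z x y
  have h₁₀ : ∃ x y, f x y z₁ ≠ f x y z₀ := ⟨x, y, by simp [h₀, h₁]⟩
  by_cases htwo : ∀ z, (∀ x y, f x y z = f x y z₀) ∨ ∀ x y, f x y z = f x y z₁
  · exact .inl (hf.hasDiagonalBoxes_of_two_slices h₁₀ htwo)
  · push Not at htwo
    obtain ⟨z₂, h₂₀, h₂₁⟩ := htwo
    refine .inr (hf.exists_isCyclicPattern_of_slices_ne ![z₀, z₁, z₂] fun c => ?_)
    fin_cases c
    · simpa [eq_comm] using h₂₀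
    · exact h₁₀
    · exact h₂₁

end CyclicPattern

section PatternConsequences

variable {X Y Z : Type*} {f g : X → Y → Z → ℤ} {x : Fin 3 → X} {y : Fin 3 → Y} {z : Fin 3 → Z}

namespace IsCyclicPattern

/-- Off the diagonal `a = b` the pattern equals one exactly when `c` lies on the cyclic arc from
`a` to `b`, including `a` and excluding `b`. -/
theorem apply_eq (h : IsCyclicPattern f x y z) (h01 : ∀ x y z, f x y z = 0 ∨ f x y z = 1)
    {a b : Fin 3} (hab : a ≠ b) (c : Fin 3) :
    f (x a) (y b) (z c) = if c - a < b - a then 1 else 0 := by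
  have h01' := fun c => h01 (x a) (y b) (z c)
  grind [h a b 0, h a b 1, h a b 2, h01' 0, h01' 1, h01' 2]

theorem apply_diag (h : IsCyclicPattern f x y z) (a c : Fin 3) :
    f (x a) (y a) (z c) = f (x a) (y a) (z (c - 1)) := by
  simpa [sub_eq_zero] using h a a c

theorem injective_left (h : IsCyclicPattern f x y z) : x.Injective := by
  intro a a' haa'
  have h₁ := h a a' a
  have h₂ := h a' a' a
  grind

theorem injective_middle (h : IsCyclicPattern f x y z) : y.Injective := by
  intro b b' hbb'
  have h₁ := h b b' b
  have h₂ := h b b b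
  grind

theorem injective_right (h : IsCyclicPattern f x y z)
    (h01 : ∀ x y z, f x y z = 0 ∨ f x y z = 1) : z.Injective := by
  intro c c' hcc'
  by_contra hne
  have h₁ := h.apply_eq h01 hne c
  have h₂ := h.apply_eq h01 hne c'
  grind

end IsCyclicPattern

/-- Every possible set of agreeing coordinates is realized by a pair of points of `S`. -/
def RealizesAllAgreements (S : Set (X × Y × Z)) : Prop :=
  ∀ P Q R : Prop, ∃ p ∈ S, ∃ q ∈ S,
    (p.1 = q.1 ↔ P) ∧ (p.2.1 = q.2.1 ↔ Q) ∧ (p.2.2 = q.2.2 ↔ R)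

theorem RealizesAllAgreements.mono {S T : Set (X × Y × Z)} (hS : RealizesAllAgreements S)
    (hST : S ⊆ T) : RealizesAllAgreements T := by
  intro P Q R
  obtain ⟨p, hp, q, hq, h⟩ := hS P Q R
  exact ⟨p, hST hp, q, hST hq, h⟩

theorem IsCyclicPattern.realizesAllAgreements (h : IsCyclicPattern f x y z)
    (h01 : ∀ x y z, f x y z = 0 ∨ f x y z = 1) :
    RealizesAllAgreements {p : X × Y × Z | f p.1 p.2.1 p.2.2 = 1} := by
  intro P Q R
  obtain ⟨a, b, c, a', b', c', hab, hab', habc, habc', hP, hQ, hR⟩ :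
      ∃ a b c a' b' c' : Fin 3, a ≠ b ∧ a' ≠ b' ∧ c - a < b - a ∧ c' - a' < b' - a' ∧
        (a = a' ↔ P) ∧ (b = b' ↔ Q) ∧ (c = c' ↔ R) := by
    by_cases P <;> by_cases Q <;> by_cases R <;> simp only [*, iff_true, iff_false] <;> decide
  refine ⟨(x a, y b, z c), ?_, (x a', y b', z c'), ?_, ?_, ?_, ?_⟩
  · exact (h.apply_eq h01 hab c).trans (if_pos habc)
  · exact (h.apply_eq h01 hab' c').trans (if_pos habc')
  · exact h.injective_left.eq_iff.trans hP
  · exact h.injective_middle.eq_iff.trans hQ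
  · exact (h.injective_right h01).eq_iff.trans hR

theorem IsLineFreeNull.eq_of_empty_lines (hf : IsLineFreeNull f) {x₀ : X} {y₀ y₁ : Y}
    (h₀ : ∀ z, f x₀ y₀ z = 0) (h₁ : ∀ z, f x₀ y₁ z = 0) (x : X) (z : Z) :
    f x y₀ z = f x y₁ z := by
  obtain ⟨z₀, hz₀⟩ := hf.exists_zero_z x y₀
  obtain ⟨z₁, hz₁⟩ := hf.exists_zero_z x y₁
  have h01 := hf.zero_or_one x
  grind [hf.cuboidNull x x₀ y₀ y₁ z z₀, hf.cuboidNull x x₀ y₀ y₁ z z₁, h01 y₀ z, h01 y₁ z,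
    h01 y₁ z₀, h01 y₀ z₁]

theorem eq_zero_of_additive_of_off_diagonal {h : X → Y → ℤ}
    (hadd : ∀ x x' y y', h x y + h x' y' = h x' y + h x y')
    (hoff : ∀ a b, a ≠ b → h (x a) (y b) = 0) (hrow : ∀ x', ∃ b, h x' (y b) = 0)
    (hcol : ∀ y', ∃ a, h (x a) y' = 0) (x' : X) (y' : Y) : h x' y' = 0 := by
  have hgrid : ∀ a b, h (x a) (y b) = 0 := by
    intro a b
    by_cases hab : a = b
    · have := hadd (x a) (x (a + 2)) (y b) (y (a + 1))
      grind
    · exact hoff a b hab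
  obtain ⟨b, hb⟩ := hrow x'
  obtain ⟨a, ha⟩ := hcol y'
  linarith [hadd x' (x a) y' (y b), hgrid a b]

/-- The difference of two slices of `g` is additive in the first two coordinates and vanishes over
every line in the third direction which meets `f`; the latter lines are sufficiently well spread to
force it to vanish everywhere. -/
theorem IsLineFreeNull.eq_of_support_over_empty_lines (hf : IsLineFreeNull f) (hg : CuboidNull g)
    (hsupp : ∀ x y z, g x y z ≠ 0 → ∀ z', f x y z' = 0)
    (hoff : ∀ a b, a ≠ b → ∃ z, f (x a) (y b) z ≠ 0)
    (hx : ∃ y z, f (x 0) y z ≠ f (x 1) y z) (hy : ∃ x z, f x (y 0) z ≠ f x (y 1) z)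
    (x' : X) (y' : Y) (z z' : Z) : g x' y' z = g x' y' z' := by
  have hvanish (x' : X) (y' : Y) (h : ¬ ∀ w, f x' y' w = 0) : g x' y' z - g x' y' z' = 0 := by
    have hg₀ (w : Z) : g x' y' w = 0 := by
      by_contra hw
      exact h (hsupp x' y' w hw)
    rw [hg₀, hg₀, sub_zero]
  refine sub_eq_zero.mp (eq_zero_of_additive_of_off_diagonal
    (h := fun x' y' => g x' y' z - g x' y' z') (x := x) (y := y) ?_ ?_ ?_ ?_ x' y')
  · intro x x' y y'
    linarith [hg x x' y y' z z']
  · exact fun a b hab => hvanish _ _ (by simpa using hoff a b hab)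
  · intro x'
    by_contra! hne
    obtain ⟨x, z, hxz⟩ := hy
    exact hxz (hf.eq_of_empty_lines (not_imp_comm.mp (hvanish x' (y 0)) (hne 0))
      (not_imp_comm.mp (hvanish x' (y 1)) (hne 1)) x z)
  · intro y'
    by_contra! hne
    obtain ⟨y, z, hyz⟩ := hx
    exact hyz (hf.swap.eq_of_empty_lines (not_imp_comm.mp (hvanish (x 0) y') (hne 0))
      (not_imp_comm.mp (hvanish (x 1) y') (hne 1)) y z)

end PatternConsequences

section Partitions

variable {X Y Z : Type*} {S T V W : Set (X × Y × Z)}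

open Classical in
/-- The indicator of `S`, as a function of three separate coordinates. -/
noncomputable def gridIndicator (S : Set (X × Y × Z)) (x : X) (y : Y) (z : Z) : ℤ :=
  if (x, y, z) ∈ S then 1 else 0

theorem gridIndicator_eq_one {x : X} {y : Y} {z : Z} :
    gridIndicator S x y z = 1 ↔ (x, y, z) ∈ S := by
  simp [gridIndicator]

theorem gridIndicator_eq_zero {x : X} {y : Y} {z : Z} :
    gridIndicator S x y z = 0 ↔ (x, y, z) ∉ S := by
  simp [gridIndicator]

theorem gridIndicator_zero_or_one (S : Set (X × Y × Z)) (x : X) (y : Y) (z : Z) :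
    gridIndicator S x y z = 0 ∨ gridIndicator S x y z = 1 :=
  (em _).symm.imp gridIndicator_eq_zero.mpr gridIndicator_eq_one.mpr

/-- In one of the three directions, `V` is a union of lines. -/
def IsLineInvariant (V : Set (X × Y × Z)) : Prop :=
  (∀ x x' y z, (x, y, z) ∈ V → (x', y, z) ∈ V) ∨
  (∀ x y y' z, (x, y, z) ∈ V → (x, y', z) ∈ V) ∨
  (∀ x y z z', (x, y, z) ∈ V → (x, y, z') ∈ V)

/-- In one of the three directions, no line meets both `S` and `T`. -/
def LineSeparated (S T : Set (X × Y × Z)) : Prop :=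
  (∀ x x' y z, (x, y, z) ∈ S → (x', y, z) ∉ T) ∨
  (∀ x y y' z, (x, y, z) ∈ S → (x, y', z) ∉ T) ∨
  (∀ x y z z', (x, y, z) ∈ S → (x, y, z') ∉ T)

theorem LineSeparated.mono_left (h : LineSeparated S T) (hWS : W ⊆ S) : LineSeparated W T := by
  rcases h with h | h | h
  · exact .inl fun x x' y z hW => h x x' y z (hWS hW)
  · exact .inr (.inl fun x y y' z hW => h x y y' z (hWS hW))
  · exact .inr (.inr fun x y z z' hW => h x y z z' (hWS hW))

/-- The set `L` is a line in one of the three directions. -/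
def IsLine (L : Set (X × Y × Z)) : Prop :=
  ∃ p₀ : X × Y × Z, L = {p | p.2 = p₀.2} ∨ L = {p | p.1 = p₀.1 ∧ p.2.2 = p₀.2.2} ∨
    L = {p | p.1 = p₀.1 ∧ p.2.1 = p₀.2.1}

theorem IsLine.nonempty {L : Set (X × Y × Z)} (hL : IsLine L) : L.Nonempty := by
  obtain ⟨p₀, rfl | rfl | rfl⟩ := hL <;> exact ⟨p₀, by simp⟩

theorem IsLine.isLineInvariant {L : Set (X × Y × Z)} (hL : IsLine L) : IsLineInvariant L := by
  obtain ⟨p₀, rfl | rfl | rfl⟩ := hL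
  · exact .inl fun _ _ _ _ h => h
  · exact .inr (.inl fun _ _ _ _ h => h)
  · exact .inr (.inr fun _ _ _ _ h => h)

theorem IsLineInvariant.cuboidNull (hV : IsLineInvariant V) : CuboidNull (gridIndicator V) := by
  intro x x' y y' z z'
  rcases hV with h | h | h
  · have h' (y z) : gridIndicator V x y z = gridIndicator V x' y z := by grind [gridIndicator]
    simp only [h', add_comm, add_left_comm]
  · have h' (x z) : gridIndicator V x y z = gridIndicator V x y' z := by grind [gridIndicator]
    simp only [h', add_comm, add_left_comm]
  · have h' (x y) : gridIndicator V x y z = gridIndicator V x y z' := by grind [gridIndicator]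
    simp only [h', add_comm, add_left_comm]

theorem CuboidNull.gridIndicator_sdiff (hS : CuboidNull (gridIndicator S))
    (hT : CuboidNull (gridIndicator T)) (hTS : T ⊆ S) : CuboidNull (gridIndicator (S \ T)) := by
  have hsub (x y z) :
      gridIndicator (S \ T) x y z = gridIndicator S x y z - gridIndicator T x y z := by
    grind [gridIndicator]
  intro x x' y y' z z'
  simp only [hsub]
  linarith [hS x x' y y' z z', hT x x' y y' z z']

/-- The set `S` is a union of pairwise disjoint lines, possibly in different directions. -/
def IsDisjointUnionOfLines (S : Set (X × Y × Z)) : Prop :=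
  ∃ 𝓛 : Set (Set (X × Y × Z)), (∀ L ∈ 𝓛, IsLine L) ∧ 𝓛.PairwiseDisjoint id ∧ ⋃₀ 𝓛 = S

theorem IsDisjointUnionOfLines.union_line {L : Set (X × Y × Z)} (hS : IsDisjointUnionOfLines S)
    (hL : IsLine L) (hLS : Disjoint L S) : IsDisjointUnionOfLines (L ∪ S) := by
  obtain ⟨𝓛, hlines, hdisj, rfl⟩ := hS
  refine ⟨insert L 𝓛, Set.forall_mem_insert.mpr ⟨hL, hlines⟩, ?_, Set.sUnion_insert L 𝓛⟩
  exact hdisj.insert fun L' hL' _ => Set.disjoint_sUnion_right.mp hLS L' hL'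

theorem exists_residual [Finite X] [Finite Y] [Finite Z] (hS : CuboidNull (gridIndicator S)) :
    ∃ W ⊆ S, CuboidNull (gridIndicator W) ∧ IsDisjointUnionOfLines (S \ W) ∧
      ∀ L, IsLine L → ¬ L ⊆ W := by
  obtain ⟨W, ⟨hWS, hW, hSW⟩, hmin⟩ := exists_minimal_of_wellFoundedLT
    (fun W => W ⊆ S ∧ CuboidNull (gridIndicator W) ∧ IsDisjointUnionOfLines (S \ W))
    ⟨S, subset_rfl, hS, ∅, by simp⟩
  refine ⟨W, hWS, hW, hSW, fun L hL hLW => ?_⟩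
  have hWL : W \ L ⊆ W := Set.sdiff_subset
  have hsmaller : S \ (W \ L) = L ∪ S \ W := by grind
  have hLS : Disjoint L (S \ W) := Set.disjoint_left.mpr fun p hp hp' => hp'.2 (hLW hp)
  have hWL' : W ⊆ W \ L :=
    hmin ⟨hWL.trans hWS, hW.gridIndicator_sdiff hL.isLineInvariant.cuboidNull hLW,
      hsmaller ▸ hSW.union_line hL hLS⟩ hWL
  obtain ⟨p, hp⟩ := hL.nonempty
  exact (hWL' (hLW hp)).2 hp

end Partitions

section CyclicPatternPartitions

variable {X Y Z : Type*} {V W : Set (X × Y × Z)} {x : Fin 3 → X} {y : Fin 3 → Y} {z : Fin 3 → Z}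

namespace IsCyclicPattern

theorem mem_iff (h : IsCyclicPattern (gridIndicator W) x y z) {a b : Fin 3} (hab : a ≠ b)
    (c : Fin 3) : (x a, y b, z c) ∈ W ↔ c - a < b - a := by
  rw [← gridIndicator_eq_one, h.apply_eq (gridIndicator_zero_or_one W) hab]
  simp

theorem isLineInvariant_of_lineSeparated (h : IsCyclicPattern (gridIndicator W) x y z)
    (hW : IsLineFreeNull (gridIndicator W)) (hV : CuboidNull (gridIndicator V))
    (hWV : LineSeparated W V) : IsLineInvariant V := by
  have hval {a b : Fin 3} (hab : a ≠ b) (c : Fin 3) := h.apply_eq hW.zero_or_one hab c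
  have harc : ∀ a b : Fin 3, a ≠ b → a - a < b - a ∧ b - 1 - a < b - a := by decide
  rcases hWV with hsep | hsep | hsep
  · have hinv := hW.rotate.eq_of_support_over_empty_lines hV.rotate (x := y) (y := z)
      (fun y z x => by grind [gridIndicator])
      (fun b c hbc => ⟨x c, by grind⟩) ⟨z 0, x 2, by grind⟩ ⟨y 1, x 0, by grind⟩
    exact .inl fun x x' y z => by grind [gridIndicator, hinv y z x x']
  · have hinv := hW.rotate.rotate.swap.eq_of_support_over_empty_lines hV.rotate.rotate.swap
      (x := x) (y := fun c => z (c - 1)) (fun x z y => by grind [gridIndicator])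
      (fun a b hab => ⟨y b, by grind⟩) ⟨z 0, y 2, by grind⟩ ⟨x 0, y 1, by grind⟩
    exact .inr (.inl fun x y y' z => by grind [gridIndicator, hinv x z y y'])
  · have hinv := hW.eq_of_support_over_empty_lines hV (x := x) (y := y)
      (fun x y z => by grind [gridIndicator])
      (fun a b hab => ⟨z a, by grind⟩) ⟨y 2, z 0, by grind⟩ ⟨x 2, z 0, by grind⟩
    exact .inr (.inr fun x y z z' => by grind [gridIndicator, hinv x y z z'])

/-- The two sets of the partition through `(x 0, y 1, z 2)` and `(x 0, y 0, z 1)` have to be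
invariant in the second and the third direction, so that they share the point `(x 0, y 0, z 2)`. -/
theorem not_partition_compl (h : IsCyclicPattern (gridIndicator W) x y z)
    {𝓥 : Set (Set (X × Y × Z))} (hinv : ∀ V ∈ 𝓥, IsLineInvariant V)
    (hdisj : 𝓥.PairwiseDisjoint id) : ⋃₀ 𝓥 ≠ Wᶜ := by
  intro hcover
  have hnot : ∀ V ∈ 𝓥, ∀ p ∈ V, p ∉ W := fun V hV p hp =>
    hcover.subset (Set.mem_sUnion_of_mem hp hV)
  have hexists : ∀ p ∉ W, ∃ V ∈ 𝓥, p ∈ V := fun p hp => hcover.superset hp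
  obtain ⟨V, hV, hV₀⟩ := hexists (x 0, y 1, z 2) (by rw [h.mem_iff] <;> decide)
  have hVz : ¬ ∀ x y z z', (x, y, z) ∈ V → (x, y, z') ∈ V := fun hz =>
    hnot V hV _ (hz _ _ _ (z 0) hV₀) ((h.mem_iff (by decide) _).mpr (by decide))
  have hVx : ¬ ∀ x x' y z, (x, y, z) ∈ V → (x', y, z) ∈ V := fun hx =>
    hnot V hV _ (hx _ (x 2) _ _ hV₀) ((h.mem_iff (by decide) _).mpr (by decide))
  have hVy := ((hinv V hV).resolve_left hVx).resolve_right hVz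
  have hV₁ : (x 0, y 0, z 2) ∈ V := hVy _ _ _ _ hV₀
  have hdiag : (x 0, y 0, z 1) ∉ W := by
    rw [← gridIndicator_eq_zero, ← gridIndicator_eq_zero.mpr (hnot V hV _ hV₁)]
    exact (h.apply_diag 0 2).symm
  obtain ⟨V', hV', hV'₀⟩ := hexists _ hdiag
  have hV'x : ¬ ∀ x x' y z, (x, y, z) ∈ V' → (x', y, z) ∈ V' := fun hx =>
    hnot V' hV' _ (hx _ (x 1) _ _ hV'₀) ((h.mem_iff (by decide) _).mpr (by decide))
  have hV'y : ¬ ∀ x y y' z, (x, y, z) ∈ V' → (x, y', z) ∈ V' := fun hy =>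
    hnot V' hV' _ (hy _ _ (y 2) _ hV'₀) ((h.mem_iff (by decide) _).mpr (by decide))
  have hV'z := ((hinv V' hV').resolve_left hV'x).resolve_left hV'y
  have hVV' : V = V' := hdisj.elim_set hV hV' _ hV₁ (hV'z _ _ _ _ hV'₀)
  exact hVz (hVV' ▸ hV'z)

end IsCyclicPattern

theorem isLineFreeNull_gridIndicator (hW : CuboidNull (gridIndicator W)) (hne : W.Nonempty)
    (hlines : ∀ L, IsLine L → ¬ L ⊆ W) : IsLineFreeNull (gridIndicator W) := by
  obtain ⟨⟨x₀, y₀, z₀⟩, -⟩ := hne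
  simp only [Set.not_subset] at hlines
  refine ⟨gridIndicator_zero_or_one W, hW, fun y z => ?_, fun x z => ?_, fun x y => ?_⟩ <;>
    simp only [gridIndicator_eq_zero]
  · obtain ⟨⟨x, y', z'⟩, hp, hpW⟩ := hlines _ ⟨(x₀, y, z), .inl rfl⟩
    obtain ⟨rfl, rfl⟩ := Prod.mk.inj hp
    exact ⟨x, hpW⟩
  · obtain ⟨⟨x', y, z'⟩, ⟨rfl, rfl⟩, hpW⟩ := hlines _ ⟨(x, y₀, z), .inr (.inl rfl)⟩
    exact ⟨y, hpW⟩
  · obtain ⟨⟨x', y', z⟩, ⟨rfl, rfl⟩, hpW⟩ := hlines _ ⟨(x, y, z₀), .inr (.inr rfl)⟩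
    exact ⟨z, hpW⟩

theorem IsDisjointUnionOfLines.exists_isLineInvariant_partition_compl {ι : Type*}
    {S : ι → Set (X × Y × Z)} {i₀ : ι} (hSW : IsDisjointUnionOfLines (S i₀ \ W)) (hWS : W ⊆ S i₀)
    (hpart : ∀ p, ∃! i, p ∈ S i) (hinv : ∀ i ≠ i₀, IsLineInvariant (S i)) :
    ∃ 𝓥 : Set (Set (X × Y × Z)),
      (∀ V ∈ 𝓥, IsLineInvariant V) ∧ 𝓥.PairwiseDisjoint id ∧ ⋃₀ 𝓥 = Wᶜ := by
  obtain ⟨𝓛, h𝓛, h𝓛disj, h𝓛S⟩ := hSW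
  have hdisj (i j : ι) (hij : i ≠ j) : Disjoint (S i) (S j) :=
    Set.disjoint_left.mpr fun p hi hj => hij ((hpart p).unique hi hj)
  refine ⟨𝓛 ∪ S '' {i₀}ᶜ, ?_, Set.pairwiseDisjoint_union.mpr ⟨h𝓛disj, ?_, ?_⟩, ?_⟩
  · rintro V (hV | ⟨i, hi, rfl⟩)
    · exact (h𝓛 V hV).isLineInvariant
    · exact hinv i hi
  · rintro _ ⟨i, -, rfl⟩ _ ⟨j, -, rfl⟩ hij
    exact hdisj i j (ne_of_apply_ne S hij)
  · rintro L hL _ ⟨i, hi, rfl⟩ -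
    have hLS : L ⊆ S i₀ := (Set.subset_sUnion_of_mem hL).trans (h𝓛S.trans_subset Set.sdiff_subset)
    exact (hdisj i₀ i (Ne.symm hi)).mono_left hLS
  · ext p
    obtain ⟨i, hi, huniq⟩ := hpart p
    rw [Set.sUnion_union, h𝓛S, Set.sUnion_image]
    simp only [Set.mem_union, Set.mem_sdiff, Set.mem_iUnion, Set.mem_compl_iff,
      Set.mem_singleton_iff]
    grind

theorem isDisjointUnionOfLines_or_hasDiagonalBoxes_of_partition [Finite X] [Finite Y] [Finite Z]
    {ι : Type*} {S : ι → Set (X × Y × Z)} (hS : ∀ i, CuboidNull (gridIndicator (S i)))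
    (hpart : ∀ p, ∃! i, p ∈ S i) {i₀ : ι}
    (hsep : RealizesAllAgreements (S i₀) → ∀ i ≠ i₀, LineSeparated (S i₀) (S i)) :
    IsDisjointUnionOfLines (S i₀) ∨ HasDiagonalBoxes (S i₀) := by
  obtain ⟨W, hWS, hW, hSW, hlines⟩ := exists_residual (hS i₀)
  rcases W.eq_empty_or_nonempty with rfl | hne
  · exact .inl (by simpa using hSW)
  have hfree := isLineFreeNull_gridIndicator hW hne hlines
  have hWset : {p : X × Y × Z | gridIndicator W p.1 p.2.1 p.2.2 = 1} = W :=
    Set.ext fun _ => gridIndicator_eq_one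
  have hone : ∃ x y z, gridIndicator W x y z = 1 := by
    simpa [gridIndicator_eq_one, Set.Nonempty] using hne
  rcases hfree.hasDiagonalBoxes_or_exists_isCyclicPattern hone with hbox | ⟨x, y, z, hpattern⟩
  · exact .inr ((hWset ▸ hbox).mono hWS)
  have hrealize : RealizesAllAgreements (S i₀) :=
    (hWset ▸ hpattern.realizesAllAgreements hfree.zero_or_one).mono hWS
  have hinv (i : ι) (hi : i ≠ i₀) : IsLineInvariant (S i) :=
    hpattern.isLineInvariant_of_lineSeparated hfree (hS i) ((hsep hrealize i hi).mono_left hWS)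
  obtain ⟨𝓥, h𝓥, hdisj, hcover⟩ := hSW.exists_isLineInvariant_partition_compl hWS hpart hinv
  exact absurd hcover (hpattern.not_partition_compl h𝓥 hdisj)

end CyclicPatternPartitions

section ExponentialSums

open ZMod

theorem isUnit_or_exists_prime_dvd {M : ℕ} (k : ZMod M) :
    IsUnit k ∨ ∃ p : ℕ, p.Prime ∧ p ∣ M ∧ (p : ZMod M) ∣ k := by
  obtain ⟨d, hdM, u, hu, rfl⟩ := k.eq_unit_mul_divisor
  rcases eq_or_ne d 1 with rfl | hd
  · exact .inl (by simpa using hu)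
  · obtain ⟨p, hp, hpd⟩ := Nat.exists_prime_and_dvd hd
    exact .inr ⟨p, hp, hpd.trans hdM, dvd_mul_of_dvd_right (Nat.cast_dvd_cast hpd) u⟩

variable {M : ℕ} [NeZero M] {A B : Finset (ZMod M)}

/-- The exponential sum `A(ω ^ k) = Σ_{a ∈ A} ω ^ (a k)`, where `ω = exp (2 π i / M)`. -/
noncomputable def expSum (A : Finset (ZMod M)) (k : ZMod M) : ℂ :=
  ∑ a ∈ A, stdAddChar (a * k)

theorem aeval_maskPoly (A : Finset (ZMod M)) (k : ZMod M) :
    aeval (stdAddChar k : ℂ) (maskPoly M A) = expSum A k := by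
  simp only [maskPoly, expSum, map_sum, map_pow, aeval_X, ← AddChar.map_nsmul_eq_pow,
    nsmul_eq_mul, natCast_zmod_val]

theorem expSum_univ_of_ne_zero {k : ZMod M} (hk : k ≠ 0) : expSum Finset.univ k = 0 := by
  simpa [expSum, hk] using AddChar.sum_mulShift (R' := ℂ) k (isPrimitive_stdAddChar M)

theorem expSum_unit_mul_eq_zero {u k : ZMod M} (hu : IsUnit u) (h : expSum A k = 0) :
    expSum A (u * k) = 0 := by
  have hpow : (stdAddChar k : ℂ) ^ M = 1 := by
    rw [← AddChar.map_nsmul_eq_pow, nsmul_eq_mul, natCast_self, zero_mul, AddChar.map_zero_eq_one]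
  have hfin : IsOfFinOrder (stdAddChar k : ℂ) :=
    isOfFinOrder_iff_pow_eq_one.mpr ⟨M, NeZero.pos M, hpow⟩
  have hprim := IsPrimitiveRoot.orderOf (stdAddChar k : ℂ)
  have hcoprime : u.val.Coprime (orderOf (stdAddChar k : ℂ)) :=
    (val_coe_unit_coprime hu.unit).coprime_dvd_right (orderOf_dvd_of_pow_eq_one hpow)
  have hconj : (stdAddChar (u * k) : ℂ) = stdAddChar k ^ u.val := by
    rw [← AddChar.map_nsmul_eq_pow, nsmul_eq_mul, natCast_zmod_val]
  have hdvd : minpoly ℤ (stdAddChar k : ℂ) ∣ maskPoly M A :=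
    minpoly.isIntegrallyClosed_dvd (hprim.isIntegral hfin.orderOf_pos)
      ((aeval_maskPoly A k).trans h)
  rw [hprim.minpoly_eq_pow_coprime hcoprime, ← hconj] at hdvd
  rw [← aeval_maskPoly]
  exact aeval_eq_zero_of_dvd_aeval_eq_zero hdvd (minpoly.aeval ℤ _)

theorem expSum_eq_zero_of_isUnit (hA : cycDvd M M A) {k : ZMod M} (hk : IsUnit k) :
    expSum A k = 0 := by
  have hprim : IsPrimitiveRoot (stdAddChar (1 : ZMod M) : ℂ) M := by
    have h := stdAddChar_coe (N := M) 1
    rw [Int.cast_one, Int.cast_one, mul_one] at h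
    exact h ▸ Complex.isPrimitiveRoot_exp M (NeZero.ne M)
  have hroot : aeval (stdAddChar (1 : ZMod M) : ℂ) (cyclotomic M ℤ) = 0 := by
    rw [aeval_def, eval₂_eq_eval_map, map_cyclotomic]
    exact hprim.isRoot_cyclotomic (NeZero.pos M)
  have h₁ : expSum A 1 = 0 :=
    (aeval_maskPoly A 1).symm.trans (aeval_eq_zero_of_dvd_aeval_eq_zero hA hroot)
  simpa using expSum_unit_mul_eq_zero hk h₁

theorem existsUnique_of_sum_stdAddChar_eq {ι : Type*} {s : Finset ι} {φ : ι → ZMod M}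
    (h : ∀ k, ∑ i ∈ s, (stdAddChar (φ i * k) : ℂ) = expSum Finset.univ k) (z : ZMod M) :
    ∃! i, i ∈ s ∧ φ i = z := by
  classical
  have hdft : 𝓕 (fun z => ∑ i ∈ s, if φ i = z then (1 : ℂ) else 0) = 𝓕 fun _ => (1 : ℂ) := by
    ext k
    simp only [dft_apply, smul_eq_mul, Finset.mul_sum]
    rw [Finset.sum_comm]
    simpa [expSum] using h (-k)
  have hone := congrFun (dft.injective hdft) z
  rw [← Finset.sum_filter, Finset.sum_const, nsmul_eq_mul, mul_one, Nat.cast_eq_one,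
    Finset.card_eq_one] at hone
  obtain ⟨i, hi⟩ := hone
  simp only [Finset.eq_singleton_iff_unique_mem, Finset.mem_filter] at hi
  exact ⟨i, hi⟩

namespace IsTiling

theorem expSum_mul_expSum (h : IsTiling M A B) (k : ZMod M) :
    expSum A k * expSum B k = expSum Finset.univ k := by
  rw [expSum, expSum, Finset.sum_mul_sum, ← Finset.sum_product']
  refine Finset.sum_bij (fun p _ => p.1 + p.2) (fun _ _ => Finset.mem_univ _) ?_ ?_ ?_
  · intro p hp q hq hpq
    rw [Finset.mem_product] at hp hq
    exact (h (q.1 + q.2)).unique ⟨hp.1, hp.2, hpq⟩ ⟨hq.1, hq.2, rfl⟩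
  · intro z _
    obtain ⟨p, ⟨hpA, hpB, hp⟩, -⟩ := h z
    exact ⟨p, Finset.mem_product.mpr ⟨hpA, hpB⟩, hp⟩
  · intro p _
    rw [add_mul, AddChar.map_add_eq_mul]

/-- Tijdeman's theorem: the tiling complement `B` can be replaced by its dilate `u B`. Indeed
`A(ω ^ k) B(ω ^ k) = 0` for `k ≠ 0`, and the vanishing of `B(ω ^ k)` is invariant under the Galois
conjugation `ω ↦ ω ^ u`. -/
theorem existsUnique_add_unit_mul (h : IsTiling M A B) {u : ZMod M} (hu : IsUnit u) (z : ZMod M) :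
    ∃! ab : ZMod M × ZMod M, (ab.1 ∈ A ∧ ab.2 ∈ B) ∧ ab.1 + u * ab.2 = z := by
  simp only [← Finset.mem_product]
  refine existsUnique_of_sum_stdAddChar_eq (fun k => ?_) z
  have hfactor : ∑ ab ∈ A ×ˢ B, (stdAddChar ((ab.1 + u * ab.2) * k) : ℂ) =
      expSum A k * expSum B (u * k) := by
    rw [expSum, expSum, Finset.sum_mul_sum, ← Finset.sum_product']
    refine Finset.sum_congr rfl fun ab _ => ?_
    rw [← AddChar.map_add_eq_mul]
    congr 1
    ring
  rw [hfactor]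
  by_cases hk : k = 0
  · rw [hk, mul_zero, h.expSum_mul_expSum]
  · have hzero := h.expSum_mul_expSum k
    rw [expSum_univ_of_ne_zero hk] at hzero ⊢
    rcases mul_eq_zero.mp hzero with hA | hB
    · rw [hA, zero_mul]
    · rw [expSum_unit_mul_eq_zero hu hB, mul_zero]

/-- A form of Sands' theorem. -/
theorem eq_of_associated (h : IsTiling M A B) {a a' b b' : ZMod M} (ha : a ∈ A) (ha' : a' ∈ A)
    (hb : b ∈ B) (hb' : b' ∈ B) (hassoc : Associated (b - b') (a - a')) : b = b' := by
  obtain ⟨u, hu⟩ := hassoc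
  have heq : (a', b) = (a, b') := (h.existsUnique_add_unit_mul u.isUnit (a + u * b')).unique
    ⟨⟨ha', hb⟩, by linear_combination hu⟩ ⟨⟨ha, hb'⟩, rfl⟩
  exact (Prod.mk.inj heq).2

end IsTiling

theorem dft_indicator (A : Finset (ZMod M)) (k : ZMod M) :
    𝓕 (Set.indicator (A : Set (ZMod M)) (1 : ZMod M → ℂ)) k = expSum A (-k) := by
  classical
  simp [dft_apply, expSum, Set.indicator_apply]

theorem dft_fwdDiff (u : ZMod M) (Φ : ZMod M → ℂ) (k : ZMod M) :
    𝓕 (fwdDiff u Φ) k = (stdAddChar (u * k) - 1) * 𝓕 Φ k := by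
  simp only [dft_apply, fwdDiff, smul_eq_mul, mul_sub, Finset.sum_sub_distrib, sub_mul, one_mul]
  congr 1
  rw [Finset.mul_sum, ← Equiv.sum_comp (Equiv.addRight u) fun j => _ * (_ * Φ j)]
  refine Finset.sum_congr rfl fun j _ => ?_
  rw [← mul_assoc, ← AddChar.map_add_eq_mul, Equiv.coe_addRight]
  congr 3
  ring

theorem fwdDiff_fwdDiff_fwdDiff_indicator (hA : cycDvd M M A) {p q r : ℕ}
    (hpqr : ∀ s : ℕ, s.Prime → s ∣ M → s = p ∨ s = q ∨ s = r) {u v w : ZMod M}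
    (hu : p * u = 0) (hv : q * v = 0) (hw : r * w = 0) :
    fwdDiff u (fwdDiff v (fwdDiff w (Set.indicator (A : Set (ZMod M)) (1 : ZMod M → ℂ)))) = 0 := by
  refine dft.injective ?_
  rw [map_zero]
  ext k
  have hchar {s : ℕ} {t : ZMod M} (ht : s * t = 0) (hs : (s : ZMod M) ∣ k) :
      (stdAddChar (t * k) : ℂ) - 1 = 0 := by
    obtain ⟨l, rfl⟩ := hs
    rw [← mul_assoc, mul_comm t, ht, zero_mul, AddChar.map_zero_eq_one, sub_self]
  simp only [dft_fwdDiff, dft_indicator, Pi.zero_apply, mul_eq_zero]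
  rcases isUnit_or_exists_prime_dvd k with hk | ⟨s, hs, hsM, hsk⟩
  · exact .inr (.inr (.inr (expSum_eq_zero_of_isUnit hA hk.neg)))
  · rcases hpqr s hs hsM with rfl | rfl | rfl
    · exact .inl (hchar hu hsk)
    · exact .inr (.inl (hchar hv hsk))
    · exact .inr (.inr (.inl (hchar hw hsk)))

end ExponentialSums

section TorsionArithmetic

theorem exists_add_eq_of_isCoprime_of_mul_eq_zero {R : Type*} [CommRing R] {x y z : R}
    (hxy : IsCoprime x y) (hz : x * y * z = 0) : ∃ s t, x * s = 0 ∧ y * t = 0 ∧ s + t = z := by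
  obtain ⟨α, β, hαβ⟩ := hxy
  exact ⟨β * y * z, α * x * z, by linear_combination β * hz, by linear_combination α * hz,
    by linear_combination z * hαβ⟩

variable {M : ℕ} [NeZero M]

theorem natCast_dvd_iff_mul_eq_zero {d e : ℕ} (hM : M = d * e) (x : ZMod M) :
    (d : ZMod M) ∣ x ↔ (e : ZMod M) * x = 0 := by
  constructor
  · rintro ⟨y, rfl⟩
    rw [← mul_assoc, ← Nat.cast_mul, mul_comm e, ← hM, ZMod.natCast_self, zero_mul]
  · intro h
    rw [← ZMod.natCast_zmod_val x, ← Nat.cast_mul, ZMod.natCast_eq_zero_iff] at h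
    have he : 0 < e := Nat.pos_of_ne_zero fun h₀ => NeZero.ne M (by rw [hM, h₀, mul_zero])
    have hdvd : d ∣ x.val := Nat.dvd_of_mul_dvd_mul_left he (by rwa [mul_comm e d, ← hM])
    simpa using Nat.cast_dvd_cast (α := ZMod M) hdvd

theorem associated_of_dvd_of_dvd {x y : ZMod M} (hxy : x ∣ y) (hyx : y ∣ x) : Associated x y := by
  have dvd_of_cast_dvd {d d' : ℕ} (hd : d ∣ M) (h : (d : ZMod M) ∣ d') : d ∣ d' := by
    obtain ⟨e, he⟩ := hd
    rw [natCast_dvd_iff_mul_eq_zero he, ← Nat.cast_mul, ZMod.natCast_eq_zero_iff, he,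
      mul_comm d] at h
    exact Nat.dvd_of_mul_dvd_mul_left
      (Nat.pos_of_ne_zero fun h₀ => NeZero.ne M (by rw [he, h₀, mul_zero])) h
  obtain ⟨d, hd, u, hu, rfl⟩ := x.eq_unit_mul_divisor
  obtain ⟨d', hd', v, hv, rfl⟩ := y.eq_unit_mul_divisor
  rw [hu.mul_left_dvd, hv.dvd_mul_left] at hxy
  rw [hv.mul_left_dvd, hu.dvd_mul_left] at hyx
  obtain rfl := Nat.dvd_antisymm (dvd_of_cast_dvd hd hxy) (dvd_of_cast_dvd hd' hyx)
  exact (associated_unit_mul_left _ u hu).trans (associated_unit_mul_left _ v hv).symm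

theorem pow_dvd_or_forall_dvd_of_mul_eq_zero {p n m : ℕ} (hp : p.Prime) (hM : M = p ^ n * m)
    (x : ZMod M) : (p : ZMod M) ^ n ∣ x ∨ ∀ u : ZMod M, p * u = 0 → x ∣ u := by
  obtain ⟨d, ⟨e, he⟩, v, hv, rfl⟩ := x.eq_unit_mul_divisor
  by_cases hpe : p ∣ e
  · obtain ⟨k, rfl⟩ := hpe
    refine .inr fun u hu => ?_
    rw [hv.mul_left_dvd, natCast_dvd_iff_mul_eq_zero he, Nat.cast_mul, mul_right_comm, hu,
      zero_mul]
  · have hcop : (p ^ n).Coprime e := ((hp.coprime_iff_not_dvd).mpr hpe).pow_left n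
    have hdvd : p ^ n ∣ d := hcop.dvd_of_dvd_mul_right (he ▸ hM ▸ dvd_mul_right (p ^ n) m)
    exact .inl (dvd_mul_of_dvd_right (by exact_mod_cast Nat.cast_dvd_cast (α := ZMod M) hdvd) v)

theorem associated_add_of_not_pow_dvd {p n m : ℕ} (hp : p.Prime) (hM : M = p ^ (n + 1) * m)
    {x u : ZMod M} (hx : ¬ (p : ZMod M) ^ n ∣ x) (hu : p * u = 0) : Associated x (x + u) := by
  have hdvd (y : ZMod M) (hy : ¬ (p : ZMod M) ^ n ∣ y) : y ∣ u :=
    (pow_dvd_or_forall_dvd_of_mul_eq_zero hp hM y).resolve_left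
      (fun h => hy ((pow_dvd_pow _ n.le_succ).trans h)) u hu
  have hpu : (p : ZMod M) ^ n ∣ u := by
    have hM' : M = p ^ n * (p * m) := by rw [hM]; ring
    rw [← Nat.cast_pow, natCast_dvd_iff_mul_eq_zero hM', Nat.cast_mul, mul_right_comm, hu,
      zero_mul]
  have hy : x + u ∣ u := hdvd (x + u) (by rwa [dvd_add_left hpu])
  exact associated_of_dvd_of_dvd (dvd_add dvd_rfl (hdvd x hx)) ((dvd_add_left hy).mp dvd_rfl)

end TorsionArithmetic

/-- `M = p ^ (a + 1) * q ^ (b + 1) * r ^ (c + 1)` for distinct primes `p`, `q`, `r`. The exponents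
are shifted so that `D(M) = p ^ a * q ^ b * r ^ c`. -/
structure IsThreePrimeModulus (M p q r a b c : ℕ) : Prop where
  prime_left : p.Prime
  prime_mid : q.Prime
  prime_right : r.Prime
  ne_left_mid : p ≠ q
  ne_left_right : p ≠ r
  ne_mid_right : q ≠ r
  eq : M = p ^ (a + 1) * q ^ (b + 1) * r ^ (c + 1)

namespace IsThreePrimeModulus

variable {M p q r a b c : ℕ}

theorem rotate (h : IsThreePrimeModulus M p q r a b c) : IsThreePrimeModulus M q r p b c a where
  prime_left := h.prime_mid
  prime_mid := h.prime_right
  prime_right := h.prime_left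
  ne_left_mid := h.ne_mid_right
  ne_left_right := h.ne_left_mid.symm
  ne_mid_right := h.ne_left_right.symm
  eq := by rw [h.eq]; ring

theorem neZero (h : IsThreePrimeModulus M p q r a b c) : NeZero M :=
  ⟨h.eq ▸ mul_ne_zero (mul_ne_zero (pow_ne_zero _ h.prime_left.ne_zero)
    (pow_ne_zero _ h.prime_mid.ne_zero)) (pow_ne_zero _ h.prime_right.ne_zero)⟩

theorem eq_or_eq_or_eq_of_prime (h : IsThreePrimeModulus M p q r a b c) {s : ℕ} (hs : s.Prime)
    (hsM : s ∣ M) : s = p ∨ s = q ∨ s = r := by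
  rw [h.eq, hs.dvd_mul, hs.dvd_mul, or_assoc] at hsM
  exact hsM.imp (fun hd => (Nat.prime_dvd_prime_iff_eq hs h.prime_left).mp (hs.dvd_of_dvd_pow hd))
    (Or.imp (fun hd => (Nat.prime_dvd_prime_iff_eq hs h.prime_mid).mp (hs.dvd_of_dvd_pow hd))
      (fun hd => (Nat.prime_dvd_prime_iff_eq hs h.prime_right).mp (hs.dvd_of_dvd_pow hd)))

theorem isCoprime (h : IsThreePrimeModulus M p q r a b c) :
    IsCoprime (p : ZMod M) (q : ZMod M) :=
  ((Nat.coprime_primes h.prime_left h.prime_mid).mpr h.ne_left_mid).cast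

theorem mul_dvd (h : IsThreePrimeModulus M p q r a b c) {x : ZMod M} (hp : (p : ZMod M) ^ a ∣ x)
    (hq : (q : ZMod M) ^ b ∣ x) (hr : (r : ZMod M) ^ c ∣ x) :
    (p : ZMod M) ^ a * q ^ b * r ^ c ∣ x :=
  (h.rotate.rotate.isCoprime.symm.pow.mul_left h.rotate.isCoprime.pow).mul_dvd
    (h.isCoprime.pow.mul_dvd hp hq) hr

theorem dvd_iff_exists_add_add (h : IsThreePrimeModulus M p q r a b c) (x : ZMod M) :
    (p : ZMod M) ^ a * q ^ b * r ^ c ∣ x ↔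
      ∃ u v w : ZMod M, p * u = 0 ∧ q * v = 0 ∧ r * w = 0 ∧ u + v + w = x := by
  have := h.neZero
  have hM : M = p ^ a * q ^ b * r ^ c * (p * q * r) := by rw [h.eq]; ring
  have hdvd := natCast_dvd_iff_mul_eq_zero hM x
  push_cast at hdvd
  rw [hdvd]
  constructor
  · intro hx
    obtain ⟨y, w, hy, hw, rfl⟩ := exists_add_eq_of_isCoprime_of_mul_eq_zero
      (h.rotate.rotate.isCoprime.symm.mul_left h.rotate.isCoprime) hx
    obtain ⟨u, v, hu, hv, rfl⟩ := exists_add_eq_of_isCoprime_of_mul_eq_zero h.isCoprime hy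
    exact ⟨u, v, w, hu, hv, hw, rfl⟩
  · rintro ⟨u, v, w, hu, hv, hw, rfl⟩
    linear_combination (q * r : ZMod M) * hu + (p * r : ZMod M) * hv + (p * q : ZMod M) * hw

section Torsion

variable {u u' v v' w w' : ZMod M}

theorem pow_succ_dvd_add_add_iff (h : IsThreePrimeModulus M p q r a b c) (hu : p * u = 0)
    (hv : q * v = 0) (hw : r * w = 0) : (p : ZMod M) ^ (a + 1) ∣ u + v + w ↔ u = 0 := by
  have := h.neZero
  have hdvd := natCast_dvd_iff_mul_eq_zero (h.eq.trans (mul_assoc _ _ _)) (u + v + w)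
  push_cast at hdvd
  rw [hdvd]
  constructor
  · intro hm
    obtain ⟨α, β, hαβ⟩ : IsCoprime (p : ZMod M) ((q : ZMod M) ^ (b + 1) * r ^ (c + 1)) :=
      h.isCoprime.pow_right.mul_right h.rotate.rotate.isCoprime.symm.pow_right
    linear_combination (-u) * hαβ + α * hu + β * hm -
      β * (q : ZMod M) ^ b * r ^ (c + 1) * hv - β * (q : ZMod M) ^ (b + 1) * r ^ c * hw
  · rintro rfl
    linear_combination (q : ZMod M) ^ b * r ^ (c + 1) * hv + (q : ZMod M) ^ (b + 1) * r ^ c * hw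

theorem add_add_dvd (h : IsThreePrimeModulus M p q r a b c) (hu : p * u = 0) (hv : q * v = 0)
    (hw : r * w = 0) (hu' : p * u' = 0) (huu' : u = 0 → u' = 0) : u + v + w ∣ u' := by
  have := h.neZero
  rcases pow_dvd_or_forall_dvd_of_mul_eq_zero h.prime_left (h.eq.trans (mul_assoc _ _ _))
    (u + v + w) with hdvd | hdvd
  · rw [huu' ((h.pow_succ_dvd_add_add_iff hu hv hw).mp hdvd)]
    exact dvd_zero _
  · exact hdvd u' hu'

theorem add_add_dvd_add_add (h : IsThreePrimeModulus M p q r a b c) (hu : p * u = 0)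
    (hv : q * v = 0) (hw : r * w = 0) (hu' : p * u' = 0) (hv' : q * v' = 0) (hw' : r * w' = 0)
    (huu' : u = 0 → u' = 0) (hvv' : v = 0 → v' = 0) (hww' : w = 0 → w' = 0) :
    u + v + w ∣ u' + v' + w' := by
  have hqdvd := h.rotate.add_add_dvd hv hw hu hv' hvv'
  have hrdvd := h.rotate.rotate.add_add_dvd hw hu hv hw' hww'
  rw [add_comm, ← add_assoc] at hqdvd
  rw [add_assoc, add_comm] at hrdvd
  exact dvd_add (dvd_add (h.add_add_dvd hu hv hw hu' huu') hqdvd) hrdvd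

theorem associated_add_add (h : IsThreePrimeModulus M p q r a b c) (hu : p * u = 0)
    (hv : q * v = 0) (hw : r * w = 0) (hu' : p * u' = 0) (hv' : q * v' = 0) (hw' : r * w' = 0)
    (huu' : u = 0 ↔ u' = 0) (hvv' : v = 0 ↔ v' = 0) (hww' : w = 0 ↔ w' = 0) :
    Associated (u + v + w) (u' + v' + w') :=
  have := h.neZero
  associated_of_dvd_of_dvd
    (h.add_add_dvd_add_add hu hv hw hu' hv' hw' huu'.mp hvv'.mp hww'.mp)
    (h.add_add_dvd_add_add hu' hv' hw' hu hv hw huu'.mpr hvv'.mpr hww'.mpr)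

end Torsion

end IsThreePrimeModulus

/-- The elements of `ℤ_M` killed by `p`. For `p ∣ M` its cosets are the `M`-fibers in the `p`
direction. -/
abbrev fiberGroup (M p : ℕ) : Submodule (ZMod M) (ZMod M) :=
  Submodule.torsionBy (ZMod M) (ZMod M) (p : ZMod M)

theorem mul_fiberGroup {M p : ℕ} (u : fiberGroup M p) : (p : ZMod M) * u = 0 :=
  (Submodule.mem_torsionBy_iff _ _).mp u.2

theorem mul_fiberGroup_sub {M p : ℕ} (u v : fiberGroup M p) : (p : ZMod M) * (u - v) = 0 :=
  mul_fiberGroup (u - v)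

/-- The coordinates on a `D(M)`-grid. -/
abbrev GridCoord (M p q r : ℕ) : Type :=
  fiberGroup M p × fiberGroup M q × fiberGroup M r

/-- The point with coordinates `P` in the `D(M)`-grid through `x`. -/
def gridPoint {M p q r : ℕ} (x : ZMod M) (P : GridCoord M p q r) : ZMod M :=
  x + (P.1 + P.2.1 + P.2.2)

section GridPoint

variable {M p q r a b c : ℕ} {x : ZMod M}

theorem gridPoint_rotate (P : GridCoord M p q r) :
    gridPoint x (P.2.1, P.2.2, P.1) = gridPoint x P := by
  simp only [gridPoint]
  ring

theorem image_gridPoint_rotate (L : Set (GridCoord M q r p)) :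
    gridPoint x '' {P : GridCoord M p q r | (P.2.1, P.2.2, P.1) ∈ L} = gridPoint x '' L := by
  ext y
  constructor
  · rintro ⟨P, hP, rfl⟩
    exact ⟨_, hP, gridPoint_rotate P⟩
  · rintro ⟨Q, hQ, rfl⟩
    exact ⟨(Q.2.2, Q.1, Q.2.1), hQ, (gridPoint_rotate (Q.2.2, Q.1, Q.2.1)).symm⟩

theorem gridPoint_sub_gridPoint (P Q : GridCoord M p q r) :
    gridPoint x P - gridPoint x Q =
      (P.1 - Q.1 : ZMod M) + (P.2.1 - Q.2.1 : ZMod M) + (P.2.2 - Q.2.2 : ZMod M) := by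
  simp only [gridPoint]
  ring

theorem fwdDiff_fwdDiff_fwdDiff_sub_apply {G H : Type*} [CommRing G] [CommRing H] (Φ : G → H)
    (x u u' v v' w w' : G) :
    fwdDiff (u' - u) (fwdDiff (v' - v) (fwdDiff (w' - w) Φ)) (x + (u + v + w)) =
      Φ (x + (u' + v' + w')) - Φ (x + (u' + v' + w)) - Φ (x + (u' + v + w')) -
        Φ (x + (u + v' + w')) + Φ (x + (u' + v + w)) + Φ (x + (u + v' + w)) +
        Φ (x + (u + v + w')) - Φ (x + (u + v + w)) := by
  simp only [fwdDiff]
  ring_nf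

theorem cuboidNull_gridIndicator_preimage [NeZero M] {A : Finset (ZMod M)} (hA : cycDvd M M A)
    (hpqr : ∀ s : ℕ, s.Prime → s ∣ M → s = p ∨ s = q ∨ s = r) (x : ZMod M) :
    CuboidNull (gridIndicator ((gridPoint x : GridCoord M p q r → ZMod M) ⁻¹' A)) := by
  classical
  intro u u' v v' w w'
  have hcast (u : fiberGroup M p) (v : fiberGroup M q) (w : fiberGroup M r) :
      (gridIndicator (gridPoint x ⁻¹' A) u v w : ℂ) =
        Set.indicator (A : Set (ZMod M)) (1 : ZMod M → ℂ) (x + (u + v + w)) := by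
    simp [Set.indicator_apply, gridIndicator, gridPoint]
  have hdiff := congrFun (fwdDiff_fwdDiff_fwdDiff_indicator hA hpqr (mul_fiberGroup_sub u' u)
    (mul_fiberGroup_sub v' v) (mul_fiberGroup_sub w' w)) (x + (u + v + w))
  rw [Pi.zero_apply, fwdDiff_fwdDiff_fwdDiff_sub_apply] at hdiff
  simp only [← hcast] at hdiff
  norm_cast at hdiff
  linarith

namespace IsThreePrimeModulus

variable (h : IsThreePrimeModulus M p q r a b c) {P Q : GridCoord M p q r}

include h

theorem pow_dvd_gridPoint_sub_left :
    (p : ZMod M) ^ (a + 1) ∣ gridPoint x P - gridPoint x Q ↔ P.1 = Q.1 := by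
  rw [gridPoint_sub_gridPoint, h.pow_succ_dvd_add_add_iff (mul_fiberGroup_sub _ _)
    (mul_fiberGroup_sub _ _) (mul_fiberGroup_sub _ _), sub_eq_zero, Subtype.coe_inj]

theorem pow_dvd_gridPoint_sub_mid :
    (q : ZMod M) ^ (b + 1) ∣ gridPoint x P - gridPoint x Q ↔ P.2.1 = Q.2.1 := by
  rw [← gridPoint_rotate P, ← gridPoint_rotate Q, h.rotate.pow_dvd_gridPoint_sub_left]

theorem pow_dvd_gridPoint_sub_right :
    (r : ZMod M) ^ (c + 1) ∣ gridPoint x P - gridPoint x Q ↔ P.2.2 = Q.2.2 := by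
  rw [← gridPoint_rotate P, ← gridPoint_rotate Q, h.rotate.pow_dvd_gridPoint_sub_mid]

theorem gridPoint_injective :
    Function.Injective (gridPoint x : GridCoord M p q r → ZMod M) := by
  intro P Q hPQ
  have hdvd (d : ZMod M) : d ∣ gridPoint x P - gridPoint x Q := by simp [hPQ]
  exact Prod.ext (h.pow_dvd_gridPoint_sub_left.mp (hdvd _))
    (Prod.ext (h.pow_dvd_gridPoint_sub_mid.mp (hdvd _))
      (h.pow_dvd_gridPoint_sub_right.mp (hdvd _)))

theorem range_gridPoint :
    Set.range (gridPoint x : GridCoord M p q r → ZMod M) =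
      gridSet M x (p ^ a * q ^ b * r ^ c) := by
  ext y
  have hdvd := h.dvd_iff_exists_add_add (y - x)
  simp only [gridSet, Set.mem_ofPred_eq, Nat.cast_mul, Nat.cast_pow, hdvd, Set.mem_range]
  constructor
  · rintro ⟨P, rfl⟩
    exact ⟨P.1, P.2.1, P.2.2, mul_fiberGroup _, mul_fiberGroup _, mul_fiberGroup _, by
      rw [gridPoint, add_sub_cancel_left]⟩
  · rintro ⟨u, v, w, hu, hv, hw, huvw⟩
    exact ⟨(⟨u, hu⟩, ⟨v, hv⟩, ⟨w, hw⟩), by rw [gridPoint, huvw, add_sub_cancel]⟩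

theorem mem_gridSet_div_iff {y : ZMod M} :
    y ∈ gridSet M x (M / p) ↔ ∃ u : fiberGroup M p, x + u = y := by
  have := h.neZero
  have hpM : p ∣ M := ⟨p ^ a * q ^ (b + 1) * r ^ (c + 1), by rw [h.eq]; ring⟩
  refine (natCast_dvd_iff_mul_eq_zero (Nat.div_mul_cancel hpM).symm (y - x)).trans ⟨?_, ?_⟩
  · exact fun hy => ⟨⟨y - x, hy⟩, add_sub_cancel x y⟩
  · rintro ⟨u, rfl⟩
    rw [add_sub_cancel_left, mul_fiberGroup]

theorem image_gridPoint_line_left (x : ZMod M) (P : GridCoord M p q r) :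
    gridPoint x '' {Q : GridCoord M p q r | Q.2 = P.2} = gridSet M (gridPoint x P) (M / p) := by
  ext y
  rw [h.mem_gridSet_div_iff]
  constructor
  · rintro ⟨Q, hQ, rfl⟩
    refine ⟨Q.1 - P.1, ?_⟩
    rw [gridPoint, gridPoint, hQ, Submodule.coe_sub]
    ring
  · rintro ⟨u, rfl⟩
    refine ⟨(P.1 + u, P.2), rfl, ?_⟩
    rw [gridPoint, gridPoint, Submodule.coe_add]
    ring

theorem image_gridPoint_line_mid (x : ZMod M) (P : GridCoord M p q r) :
    gridPoint x '' {Q : GridCoord M p q r | Q.1 = P.1 ∧ Q.2.2 = P.2.2} =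
      gridSet M (gridPoint x P) (M / q) := by
  rw [← gridPoint_rotate P, ← h.rotate.image_gridPoint_line_left,
    ← image_gridPoint_rotate {Q : GridCoord M q r p | Q.2 = (P.2.2, P.1)}]
  simp only [Set.mem_ofPred_eq, Prod.mk.injEq, and_comm]

theorem image_gridPoint_line_right (x : ZMod M) (P : GridCoord M p q r) :
    gridPoint x '' {Q : GridCoord M p q r | Q.1 = P.1 ∧ Q.2.1 = P.2.1} =
      gridSet M (gridPoint x P) (M / r) := by
  rw [← gridPoint_rotate P, ← h.rotate.image_gridPoint_line_mid,
    ← image_gridPoint_rotate {Q : GridCoord M q r p | Q.1 = P.2.1 ∧ Q.2.2 = P.1}]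
  simp only [Set.mem_ofPred_eq, and_comm]

theorem exists_image_gridPoint_eq_gridSet {L : Set (GridCoord M p q r)} (hL : IsLine L)
    (x : ZMod M) :
    ∃ y, gridPoint x '' L = gridSet M y (M / p) ∨ gridPoint x '' L = gridSet M y (M / q) ∨
      gridPoint x '' L = gridSet M y (M / r) := by
  obtain ⟨P, rfl | rfl | rfl⟩ := hL
  · exact ⟨_, .inl (h.image_gridPoint_line_left x P)⟩
  · exact ⟨_, .inr (.inl (h.image_gridPoint_line_mid x P))⟩
  · exact ⟨_, .inr (.inr (h.image_gridPoint_line_right x P))⟩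

theorem isBox_image_gridPoint (I : Set (fiberGroup M p)) (J : Set (fiberGroup M q))
    (K : Set (fiberGroup M r)) :
    IsBox M (p ^ (a + 1)) (q ^ (b + 1)) (r ^ (c + 1)) (gridSet M x (p ^ a * q ^ b * r ^ c))
      (gridPoint x '' I ×ˢ J ×ˢ K) := by
  rw [← h.range_gridPoint]
  refine ⟨Set.image_subset_range _ _, ?_⟩
  rintro _ ⟨P, hP, rfl⟩ _ ⟨Q, hQ, rfl⟩ _ ⟨R, hR, rfl⟩ _ ⟨T, rfl⟩ hp hq hr
  push_cast at hp hq hr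
  rw [h.pow_dvd_gridPoint_sub_left] at hp
  rw [h.pow_dvd_gridPoint_sub_mid] at hq
  rw [h.pow_dvd_gridPoint_sub_right] at hr
  exact ⟨T, ⟨hp ▸ hP.1, hq ▸ hQ.2.1, hr ▸ hR.2.2⟩, rfl⟩

theorem compBox_image_gridPoint {I : Set (fiberGroup M p)} {J : Set (fiberGroup M q)}
    {K : Set (fiberGroup M r)} (hI : I.Nonempty) (hJ : J.Nonempty) (hK : K.Nonempty) :
    compBox M (p ^ (a + 1)) (q ^ (b + 1)) (r ^ (c + 1)) (gridSet M x (p ^ a * q ^ b * r ^ c))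
      (gridPoint x '' I ×ˢ J ×ˢ K) = gridPoint x '' Iᶜ ×ˢ Jᶜ ×ˢ Kᶜ := by
  obtain ⟨⟨u, hu⟩, ⟨v, hv⟩, ⟨w, hw⟩⟩ := And.intro hI (And.intro hJ hK)
  rw [← h.range_gridPoint]
  ext y
  simp only [compBox, Set.mem_ofPred_eq, Set.forall_mem_image, Nat.cast_pow]
  constructor
  · rintro ⟨⟨T, rfl⟩, hT⟩
    replace hT P hP := hT (x := P) hP
    simp only [h.pow_dvd_gridPoint_sub_left, h.pow_dvd_gridPoint_sub_mid,
      h.pow_dvd_gridPoint_sub_right] at hT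
    exact ⟨T, ⟨fun hT₁ => (hT (T.1, v, w) ⟨hT₁, hv, hw⟩).1 rfl,
      fun hT₂ => (hT (u, T.2.1, w) ⟨hu, hT₂, hw⟩).2.1 rfl,
      fun hT₃ => (hT (u, v, T.2.2) ⟨hu, hv, hT₃⟩).2.2 rfl⟩, rfl⟩
  · rintro ⟨T, hT, rfl⟩
    refine ⟨⟨T, rfl⟩, fun P hP => ?_⟩
    rw [h.pow_dvd_gridPoint_sub_left, h.pow_dvd_gridPoint_sub_mid, h.pow_dvd_gridPoint_sub_right]
    exact ⟨fun h₁ => hT.1 (h₁ ▸ hP.1), fun h₂ => hT.2.1 (h₂ ▸ hP.2.1),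
      fun h₃ => hT.2.2 (h₃ ▸ hP.2.2)⟩

end IsThreePrimeModulus

section Tiling

variable {A B : Finset (ZMod M)}

theorem IsTiling.notMem_of_not_pow_dvd (ht : IsTiling M A B)
    (h : IsThreePrimeModulus M p q r a b c) {y z u b₀ b₁ : ZMod M} (hy : y ∈ A) (hu : p * u = 0)
    (hb₀ : b₀ ∈ B) (hb₁ : b₁ ∈ B) (hpow : ¬ (p : ZMod M) ^ a ∣ b₀ - b₁)
    (hzy : b₀ - b₁ + u = z - y) : z ∉ A := by
  have := h.neZero
  intro hz
  have hassoc := associated_add_of_not_pow_dvd h.prime_left (h.eq.trans (mul_assoc _ _ _)) hpow hu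
  have heq := ht.eq_of_associated hz hy hb₀ hb₁ (hzy ▸ hassoc)
  exact hpow (by simp [heq])

/-- If `D(M) ∤ b₀ - b₁`, then moving along a fiber in some direction does not change the divisor
class of `b₀ - b₁`; if `D(M) ∣ b₀ - b₁`, then this class already occurs among the differences of
`A`. Sands' theorem excludes both. -/
theorem IsTiling.lineSeparated_of_realizesAllAgreements (ht : IsTiling M A B)
    (h : IsThreePrimeModulus M p q r a b c) {b₀ b₁ : ZMod M} (hb₀ : b₀ ∈ B) (hb₁ : b₁ ∈ B)
    (hne : b₁ ≠ b₀)
    (hall : RealizesAllAgreements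
      ((gridPoint x : GridCoord M p q r → ZMod M) ⁻¹' (A : Set (ZMod M)))) :
    LineSeparated ((gridPoint x : GridCoord M p q r → ZMod M) ⁻¹' (A : Set (ZMod M)))
      (gridPoint (x + (b₀ - b₁)) ⁻¹' A) := by
  have := h.neZero
  have hnotdvd : ¬ (p : ZMod M) ^ a * q ^ b * r ^ c ∣ b₀ - b₁ := by
    rw [h.dvd_iff_exists_add_add]
    rintro ⟨u, v, w, hu, hv, hw, hsum⟩
    obtain ⟨P, hP, Q, hQ, hp, hq, hr⟩ := hall (u = 0) (v = 0) (w = 0)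
    refine hne (ht.eq_of_associated hP hQ hb₀ hb₁ ?_).symm
    rw [← hsum, gridPoint_sub_gridPoint]
    rw [← Subtype.coe_inj, ← sub_eq_zero] at hp hq hr
    exact h.associated_add_add hu hv hw (mul_fiberGroup_sub _ _) (mul_fiberGroup_sub _ _)
      (mul_fiberGroup_sub _ _) hp.symm hq.symm hr.symm
  by_cases hp : (p : ZMod M) ^ a ∣ b₀ - b₁
  · by_cases hq : (q : ZMod M) ^ b ∣ b₀ - b₁
    · have hr : ¬ (r : ZMod M) ^ c ∣ b₀ - b₁ := fun hr => hnotdvd (h.mul_dvd hp hq hr)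
      exact .inr (.inr fun u v w w' hP => ht.notMem_of_not_pow_dvd h.rotate.rotate hP
        (mul_fiberGroup_sub w' w) hb₀ hb₁ hr (by simp only [gridPoint]; ring))
    · exact .inr (.inl fun u v v' w hP => ht.notMem_of_not_pow_dvd h.rotate hP
        (mul_fiberGroup_sub v' v) hb₀ hb₁ hq (by simp only [gridPoint]; ring))
  · exact .inl fun u u' v w hP => ht.notMem_of_not_pow_dvd h hP
      (mul_fiberGroup_sub u' u) hb₀ hb₁ hp (by simp only [gridPoint]; ring)

theorem IsTiling.existsUnique_mem_preimage (ht : IsTiling M A B) (x b₀ : ZMod M)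
    (P : GridCoord M p q r) :
    ∃! b₁ : B, P ∈ gridPoint (x + (b₀ - (b₁ : ZMod M))) ⁻¹' (A : Set (ZMod M)) := by
  obtain ⟨⟨y, b₁⟩, ⟨hy, hb₁, hsum⟩, huniq⟩ := ht (gridPoint x P + b₀)
  have hshift (b₂ : ZMod M) : gridPoint (x + (b₀ - b₂)) P + b₂ = gridPoint x P + b₀ := by
    simp only [gridPoint]
    ring
  obtain rfl : y = gridPoint (x + (b₀ - b₁)) P := add_right_cancel (hsum.trans (hshift b₁).symm)
  exact ⟨⟨b₁, hb₁⟩, hy, fun b₂ hb₂ => Subtype.ext (congrArg Prod.snd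
    (huniq (gridPoint (x + (b₀ - b₂)) P, b₂) ⟨hb₂, b₂.2, hshift b₂⟩))⟩

theorem IsTiling.isDisjointUnionOfLines_or_hasDiagonalBoxes (ht : IsTiling M A B)
    (h : IsThreePrimeModulus M p q r a b c) (hA : cycDvd M M A) (x : ZMod M) :
    IsDisjointUnionOfLines ((gridPoint x : GridCoord M p q r → ZMod M) ⁻¹' A) ∨
      HasDiagonalBoxes ((gridPoint x : GridCoord M p q r → ZMod M) ⁻¹' A) := by
  have := h.neZero
  obtain ⟨⟨_, b₀⟩, ⟨-, hb₀, -⟩, -⟩ := ht 0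
  have hcuboid (b₁ : B) := cuboidNull_gridIndicator_preimage hA
    (fun _ => h.eq_or_eq_or_eq_of_prime) (x + (b₀ - b₁))
  have hcomb := isDisjointUnionOfLines_or_hasDiagonalBoxes_of_partition hcuboid
    (ht.existsUnique_mem_preimage x b₀) (i₀ := ⟨b₀, hb₀⟩)
  simp only [sub_self, add_zero] at hcomb
  exact hcomb fun hall b₁ hne =>
    ht.lineSeparated_of_realizesAllAgreements h hb₀ b₁.2 (fun heq => hne (Subtype.ext heq)) hall

end Tiling

theorem IsThreePrimeModulus.exists_fibers (h : IsThreePrimeModulus M p q r a b c)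
    {A : Set (ZMod M)}
    (hA : IsDisjointUnionOfLines ((gridPoint x : GridCoord M p q r → ZMod M) ⁻¹' A)) :
    ∃ F : Set (Set (ZMod M)),
      (∀ f ∈ F, ∃ y : ZMod M,
        f = gridSet M y (M / p) ∨ f = gridSet M y (M / q) ∨ f = gridSet M y (M / r)) ∧
      (∀ f ∈ F, ∀ g ∈ F, f ≠ g → Disjoint f g) ∧
      ⋃₀ F = A ∩ gridSet M x (p ^ a * q ^ b * r ^ c) := by
  obtain ⟨𝓛, hlines, hdisj, hA⟩ := hA
  refine ⟨Set.image (gridPoint x) '' 𝓛, ?_, ?_, ?_⟩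
  · rintro _ ⟨L, hL, rfl⟩
    exact h.exists_image_gridPoint_eq_gridSet (hlines L hL) x
  · rintro _ ⟨L, hL, rfl⟩ _ ⟨L', hL', rfl⟩ hne
    exact (hdisj hL hL' (ne_of_apply_ne _ hne)).image h.gridPoint_injective.injOn
      (Set.subset_univ _) (Set.subset_univ _)
  · rw [← h.range_gridPoint, ← Set.image_preimage_eq_inter_range, ← hA, Set.image_sUnion,
      Set.sUnion_image]

theorem IsThreePrimeModulus.exists_isBox (h : IsThreePrimeModulus M p q r a b c)
    {A : Set (ZMod M)}
    (hA : HasDiagonalBoxes ((gridPoint x : GridCoord M p q r → ZMod M) ⁻¹' A)) :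
    ∃ P : Set (ZMod M),
      IsBox M (p ^ (a + 1)) (q ^ (b + 1)) (r ^ (c + 1))
        (gridSet M x (p ^ a * q ^ b * r ^ c)) P ∧
      P.Nonempty ∧
      (compBox M (p ^ (a + 1)) (q ^ (b + 1)) (r ^ (c + 1))
        (gridSet M x (p ^ a * q ^ b * r ^ c)) P).Nonempty ∧
      P ∪ compBox M (p ^ (a + 1)) (q ^ (b + 1)) (r ^ (c + 1))
        (gridSet M x (p ^ a * q ^ b * r ^ c)) P ⊆ A := by
  obtain ⟨I, J, K, hI, hJ, hK, hI', hJ', hK', hsub, hsub'⟩ := hA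
  refine ⟨gridPoint x '' I ×ˢ J ×ˢ K, h.isBox_image_gridPoint I J K,
    (hI.prod (hJ.prod hK)).image _, ?_⟩
  rw [h.compBox_image_gridPoint hI hJ hK]
  exact ⟨(hI'.prod (hJ'.prod hK')).image _,
    Set.union_subset (Set.image_subset_iff.mpr hsub) (Set.image_subset_iff.mpr hsub')⟩

end GridPoint

/-- **Diagonal boxes.** Let `M = p_i^{n_i} p_j^{n_j} p_k^{n_k}`, `A ⊕ B = ℤ_M`,
`Φ_M | A`. If `A ∩ Λ` (for a `D(M)`-grid `Λ`) cannot be written as a union of pairwise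
disjoint `M`-fibers, then `A` contains diagonal boxes on `Λ`: a nonempty box `P ⊆ Λ` with
nonempty complementary box `P°` and `P ∪ P° ⊆ A`. -/
theorem statement11
    (pi pj pk : ℕ) (hpi : pi.Prime) (hpj : pj.Prime) (hpk : pk.Prime)
    (hij : pi ≠ pj) (hik : pi ≠ pk) (hjk : pj ≠ pk)
    (ni nj nk : ℕ) (hni : 1 ≤ ni) (hnj : 1 ≤ nj) (hnk : 1 ≤ nk)
    (M : ℕ) (hM : M = pi ^ ni * pj ^ nj * pk ^ nk)
    (A B : Finset (ZMod M))
    (htile : IsTiling M (A : Set (ZMod M)) (B : Set (ZMod M)))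
    (hPhiM : cycDvd M M A)
    (x0 : ZMod M) (D : ℕ) (hD : D = pi ^ (ni - 1) * pj ^ (nj - 1) * pk ^ (nk - 1))
    (hnofib : ¬ ∃ F : Set (Set (ZMod M)),
      (∀ f ∈ F, ∃ x : ZMod M,
        f = gridSet M x (M / pi) ∨ f = gridSet M x (M / pj) ∨ f = gridSet M x (M / pk)) ∧
      (∀ f ∈ F, ∀ g ∈ F, f ≠ g → Disjoint f g) ∧
      ⋃₀ F = (A : Set (ZMod M)) ∩ gridSet M x0 D) :
    ∃ P : Set (ZMod M),
      IsBox M (pi ^ ni) (pj ^ nj) (pk ^ nk) (gridSet M x0 D) P ∧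
      P.Nonempty ∧
      (compBox M (pi ^ ni) (pj ^ nj) (pk ^ nk) (gridSet M x0 D) P).Nonempty ∧
      P ∪ compBox M (pi ^ ni) (pj ^ nj) (pk ^ nk) (gridSet M x0 D) P ⊆ (A : Set (ZMod M)) := by
  obtain ⟨a, rfl⟩ := Nat.exists_eq_add_of_le' hni
  obtain ⟨b, rfl⟩ := Nat.exists_eq_add_of_le' hnj
  obtain ⟨c, rfl⟩ := Nat.exists_eq_add_of_le' hnk
  simp only [Nat.add_sub_cancel] at hD
  subst hD
  have h : IsThreePrimeModulus M pi pj pk a b c := ⟨hpi, hpj, hpk, hij, hik, hjk, hM⟩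
  rcases htile.isDisjointUnionOfLines_or_hasDiagonalBoxes h hPhiM x0 with hlines | hboxes
  · exact (hnofib (h.exists_fibers hlines)).elim
  · exact h.exists_isBox hboxes
end

section
/- Let M = p_i^{n_i} p_j^{n_j} p_k^{n_k} with p_i, p_j, p_k distinct primes. Assume A ⊕ B = ℤ_M and Φ_M | A. Let Λ be a D(M)-grid such that A ∩ Λ is nonempty and can be written as a union of pairwise disjoint M-fibers (possibly in different directions), but A ∩ Λ is not M-fibered in any single direction. Then A ∩ Λ contains a p_ν extended corner for some ν ∈ {i,j,k}. -/
open Polynomial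

/-- `A ∩ Λ` contains a `p` extended corner (with the other two directions `q`, `r`):
there are `a, a' ∈ A ∩ Λ` with `(a - a', M) = M/p` such that `A ∩ Λ(a, M/(qr))` is
`M`-fibered in the `q` direction but not in the `r` direction, while `A ∩ Λ(a', M/(qr))` is
`M`-fibered in the `r` direction but not in the `q` direction. -/
def ExtCorner (M p q r : ℕ) (A Lam : Set (ZMod M)) : Prop :=
  ∃ a ∈ A ∩ Lam, ∃ a' ∈ A ∩ Lam,
    Nat.gcd (a - a').val M = M / p ∧
    Fibered M q (A ∩ gridSet M a (M / (q * r))) ∧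
    ¬ Fibered M r (A ∩ gridSet M a (M / (q * r))) ∧
    Fibered M r (A ∩ gridSet M a' (M / (q * r))) ∧
    ¬ Fibered M q (A ∩ gridSet M a' (M / (q * r)))

/-!
Coordinates in `∏ i, ZMod (p i)` on the grid turn the fibers into lines parallel to the axes, so
the assumption partitions `S = A ∩ Λ` into such lines.

Suppose that only two directions of lines occur. Two lines in different directions in a common
plane spanned by these directions would meet, so `S` is fibered in one of the two directions in
each such plane. As `S` is not fibered in either of them, both kinds of planes occur, which gives
a corner.

Suppose that all three directions occur. A line in each direction makes up a pinwheel: there is a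
point `w ∉ A` from which each of the three axis-parallel moves leads to a point `y` of one of the
lines. Take `b ∈ B` and write `w + b = a + b'`, so that `a - w = b - b'` with `b ≠ b'`. By Sands'
theorem, which we deduce from Tijdeman's theorem on replacing a tile `A` by its multiple `k • A`,
`gcd(a - y, M) ≠ gcd(a - w, M)` for each of the three points `y`. Hence modulo `p i ^ n i` the
point `a` agrees with `w` or with `y`. Therefore `a` lies in the grid, and `a - w` is also a
difference of two points on the lines of the pinwheel, contradicting Sands' theorem once more.
-/

section Box

open Function

variable {ι : Type*} {α : ι → Type*}

/-- The coordinate flat of `∏ i, α i` through `x` with free directions `T`; for `T = {i}` it is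
the line through `x` in direction `i`. -/
def coordFlat (T : Set ι) (x : ∀ i, α i) : Set (∀ i, α i) :=
  {y | ∀ i ∉ T, y i = x i}

/-- The analogue of `Fibered` for a set of points of a product: with each of its points the set
contains the whole line in direction `i`. -/
def LineClosed (i : ι) (S : Set (∀ i, α i)) : Prop :=
  ∀ x ∈ S, coordFlat {i} x ⊆ S

/-- A partition of `S` into lines, encoded by the function `d` that sends a point of `S` to the
direction of the line containing it; the values of `d` outside `S` are irrelevant. -/
structure IsLineFibering (S : Set (∀ i, α i)) (d : (∀ i, α i) → ι) : Prop where
  line_subset : ∀ x ∈ S, coordFlat {d x} x ⊆ S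
  dir_eq : ∀ x ∈ S, ∀ y ∈ coordFlat {d x} x, d y = d x

lemma self_mem_coordFlat (T : Set ι) (x : ∀ i, α i) : x ∈ coordFlat T x :=
  fun _ _ => rfl

lemma coordFlat_eq_of_mem {T : Set ι} {x y : ∀ i, α i} (h : y ∈ coordFlat T x) :
    coordFlat T y = coordFlat T x := by
  ext z
  exact forall₂_congr fun i hi => by rw [h i hi]

lemma coordFlat_mono {T U : Set ι} (h : T ⊆ U) (x : ∀ i, α i) :
    coordFlat T x ⊆ coordFlat U x :=
  fun _ hy i hi => hy i fun hiT => hi (h hiT)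

lemma update_mem_coordFlat [DecidableEq ι] {T : Set ι} {i : ι} (hi : i ∈ T) (x : ∀ i, α i)
    (a : α i) :
    update x i a ∈ coordFlat T x :=
  fun _ hj => update_of_ne (ne_of_mem_of_not_mem hi hj).symm _ _

lemma eq_of_coordFlat_singleton_eq [∀ i, Nontrivial (α i)] {i j : ι} {x y : ∀ i, α i}
    (h : coordFlat {i} x = coordFlat {j} y) : i = j := by
  classical
  by_contra hij
  obtain ⟨a, ha⟩ := exists_ne (x i)
  have hx : x ∈ coordFlat {j} y := h ▸ self_mem_coordFlat {i} x
  have hux : update x i a ∈ coordFlat {j} y :=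
    h ▸ update_mem_coordFlat (Set.mem_singleton i) x a
  have hi : i ∉ ({j} : Set ι) := by simpa using hij
  exact ha (by simpa [hx i hi] using hux i hi)

lemma not_lineClosed_inter_coordFlat {S : Set (∀ i, α i)} {i : ι} {x : ∀ i, α i} (hx : x ∈ S)
    (hline : ¬ coordFlat {i} x ⊆ S) (T : Set ι) : ¬ LineClosed i (S ∩ coordFlat T x) :=
  fun h => hline ((h x ⟨hx, self_mem_coordFlat T x⟩).trans Set.inter_subset_left)

namespace IsLineFibering

variable {S : Set (∀ i, α i)} {d : (∀ i, α i) → ι}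

lemma dir_eq_of_mem_of_mem (hd : IsLineFibering S d) {x y z : ∀ i, α i} (hx : x ∈ S) (hy : y ∈ S)
    (hzx : z ∈ coordFlat {d x} x) (hzy : z ∈ coordFlat {d y} y) : d x = d y :=
  (hd.dir_eq x hx z hzx).symm.trans (hd.dir_eq y hy z hzy)

lemma lineClosed_inter_plane (hd : IsLineFibering S d) {i j : ι}
    (hdij : ∀ z ∈ S, d z = i ∨ d z = j) {x : ∀ i, α i} (hx : x ∈ S) (hdx : d x = j) :
    LineClosed j (S ∩ coordFlat {i, j} x) := by
  classical
  rintro z ⟨hzS, hzx⟩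
  have hdz : d z = j := by
    refine (hdij z hzS).elim (fun hdz => ?_) id
    have hux : update x j (z j) ∈ coordFlat {d x} x :=
      update_mem_coordFlat (by simp [hdx]) x _
    have huz : update x j (z j) ∈ coordFlat {d z} z := by
      intro l hl
      rcases eq_or_ne l j with rfl | hlj
      · simp
      · have hlij : l ∉ ({i, j} : Set ι) := by simp_all
        rw [update_of_ne hlj, hzx l hlij]
    exact (hd.dir_eq_of_mem_of_mem hx hzS hux huz).symm.trans hdx
  refine Set.subset_inter (hdz ▸ hd.line_subset z hzS) ?_
  rw [← coordFlat_eq_of_mem hzx]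
  exact coordFlat_mono (by simp) z

/-- The corner sits where the line in direction `i` through a point `y` of one kind of plane comes
closest to the line in direction `j` through a point `x` of the other kind. -/
lemma exists_corner (hd : IsLineFibering S d) {i j k : ι} (hij : i ≠ j)
    (hι : ∀ l, l = i ∨ l = j ∨ l = k) (hdk : ∀ z ∈ S, d z ≠ k)
    (hi : ¬ LineClosed i S) (hj : ¬ LineClosed j S) :
    ∃ a ∈ S, ∃ a' ∈ S, a' ∈ coordFlat {k} a ∧
      LineClosed i (S ∩ coordFlat {i, j} a) ∧ ¬ LineClosed j (S ∩ coordFlat {i, j} a) ∧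
      LineClosed j (S ∩ coordFlat {i, j} a') ∧ ¬ LineClosed i (S ∩ coordFlat {i, j} a') := by
  classical
  have hdij (z) (hz : z ∈ S) : d z = i ∨ d z = j := by
    simpa [hdk z hz] using hι (d z)
  simp only [LineClosed, not_forall] at hi hj
  obtain ⟨x, hx, hxi⟩ := hi
  obtain ⟨y, hy, hyj⟩ := hj
  have hdx : d x = j := (hdij x hx).resolve_left fun h => hxi (h ▸ hd.line_subset x hx)
  have hdy : d y = i := (hdij y hy).resolve_right fun h => hyj (h ▸ hd.line_subset y hy)
  have ha : coordFlat {i, j} (update y i (x i)) = coordFlat {i, j} y :=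
    coordFlat_eq_of_mem (update_mem_coordFlat (by simp) y _)
  have ha' : coordFlat {i, j} (update x j (y j)) = coordFlat {i, j} x :=
    coordFlat_eq_of_mem (update_mem_coordFlat (by simp) x _)
  refine ⟨update y i (x i), hd.line_subset y hy (update_mem_coordFlat (by simp [hdy]) y _),
    update x j (y j), hd.line_subset x hx (update_mem_coordFlat (by simp [hdx]) x _), ?_, ?_⟩
  · intro l hl
    obtain rfl | rfl | rfl := hι l
    · simp [hij]
    · simp [hij.symm]
    · simp at hl
  · rw [ha, ha']
    refine ⟨?_, not_lineClosed_inter_coordFlat hy hyj _, hd.lineClosed_inter_plane hdij hx hdx,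
      not_lineClosed_inter_coordFlat hx hxi _⟩
    rw [Set.pair_comm]
    exact hd.lineClosed_inter_plane (fun z hz => (hdij z hz).symm) hy hdy

end IsLineFibering

end Box

section Pinwheel

open Function

variable {α : Fin 3 → Type*}

lemma fin_three_cases (i j : Fin 3) : j = i ∨ j = i + 1 ∨ j = i + 2 := by
  omega

/-- Three pairwise disjoint lines in the three directions, `x i` lying on the one in direction `i`,
form a pinwheel around this point: moving from it in direction `i` one meets the line
through `x (i + 1)`. -/
def pinwheelCenter (x : Fin 3 → ∀ i, α i) : ∀ i, α i :=
  fun i => x (i + 2) i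

lemma update_pinwheelCenter_mem_coordFlat (x : Fin 3 → ∀ i, α i) (i : Fin 3) :
    update (pinwheelCenter x) i (x (i + 1) i) ∈ coordFlat {i + 1} (x (i + 1)) := by
  intro j hj
  obtain rfl | rfl : j = i ∨ j = i + 2 := by
    simpa [show j ≠ i + 1 from hj] using fin_three_cases i j
  · simp
  · have h : i + 2 + 2 = i + 1 := by omega
    simp [pinwheelCenter, h]

namespace IsLineFibering

variable {S : Set (∀ i, α i)} {d : (∀ i, α i) → Fin 3} {x : Fin 3 → ∀ i, α i}

lemma update_pinwheelCenter_mem (hd : IsLineFibering S d) (hx : ∀ i, x i ∈ S)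
    (hdx : ∀ i, d (x i) = i) (i : Fin 3) : update (pinwheelCenter x) i (x (i + 1) i) ∈ S := by
  refine hd.line_subset _ (hx (i + 1)) ?_
  rw [hdx]
  exact update_pinwheelCenter_mem_coordFlat x i

lemma pinwheelCenter_notMem (hd : IsLineFibering S d) (hx : ∀ i, x i ∈ S)
    (hdx : ∀ i, d (x i) = i) : pinwheelCenter x ∉ S := by
  intro hw
  obtain ⟨i, hi⟩ : ∃ i, d (pinwheelCenter x) = i := ⟨_, rfl⟩
  have hmem := update_pinwheelCenter_mem_coordFlat x i
  have hdir : d (pinwheelCenter x) = d (x (i + 1)) :=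
    hd.dir_eq_of_mem_of_mem (z := update (pinwheelCenter x) i (x (i + 1) i)) hw (hx (i + 1))
      (update_mem_coordFlat (by simp [hi]) _ _) (by rwa [hdx])
  rw [hi, hdx] at hdir
  omega

lemma exists_sub_eq_sub_pinwheelCenter [∀ i, AddCommGroup (α i)] (hd : IsLineFibering S d)
    (hx : ∀ i, x i ∈ S) (hdx : ∀ i, d (x i) = i) {c : ∀ i, α i} {i : Fin 3}
    (hc : c i = x (i + 1) i) : ∃ s ∈ S, ∃ s' ∈ S, s - s' = c - pinwheelCenter x := by
  have hline (j) (a : α j) : update (x j) j a ∈ S :=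
    hd.line_subset _ (hx j) (update_mem_coordFlat (by simp [hdx]) _ a)
  have hne : i ≠ i + 1 ∧ i ≠ i + 2 ∧ i + 1 ≠ i + 2 := by omega
  have h13 : i + 1 + 2 = i := by omega
  have h22 : i + 2 + 2 = i + 1 := by omega
  refine ⟨_, hline (i + 1) (x (i + 2) (i + 1) + (c (i + 1) - x i (i + 1))),
    _, hline (i + 2) (x (i + 1) (i + 2) - (c (i + 2) - x (i + 1) (i + 2))), ?_⟩
  funext j
  obtain rfl | rfl | rfl : j = i ∨ j = i + 1 ∨ j = i + 2 := fin_three_cases i j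
  · simp [pinwheelCenter, hc, hne]
  · simp [pinwheelCenter, h13, hne]
  · simp [pinwheelCenter, h22, hne.2.2.symm]

end IsLineFibering

end Pinwheel

section Tijdeman

open AddMonoidAlgebra

variable {G ι κ R : Type*} [Fintype ι]

lemma surjective_of_sum_single_eq_sum_single [Fintype G] [Semiring R] [Nontrivial R] {h : ι → G}
    (hsum : ∑ i, single (h i) (1 : R) = ∑ z, single z (1 : R)) : Function.Surjective h := by
  classical
  intro z
  by_contra! hz
  have hcoeff := congrArg (fun f : AddMonoidAlgebra R G => f.coeff z) hsum
  simp [AddMonoidAlgebra.coeff_sum, Finsupp.finsetSum_apply, Finsupp.single_apply, hz] at hcoeff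

lemma sum_single_mul_sum_single [Fintype κ] [Add G] [Semiring R] (f : ι → G) (g : κ → G) :
    (∑ i, single (f i) (1 : R)) * ∑ j, single (g j) (1 : R) =
      ∑ x : ι × κ, single (f x.1 + g x.2) (1 : R) := by
  simp only [Finset.sum_mul_sum, Fintype.sum_prod_type, single_mul_single, mul_one]

lemma sum_single_mul_sum_univ [AddGroup G] [Fintype G] [Semiring R] (f : ι → G) :
    (∑ i, single (f i) (1 : R)) * ∑ z, single z (1 : R) =
      (Fintype.card ι : R) • ∑ z, single z (1 : R) := by
  have htranslate (i : ι) : single (f i) (1 : R) * ∑ z, single z (1 : R) = ∑ z, single z 1 := by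
    simp only [Finset.mul_sum, single_mul_single, mul_one]
    exact Equiv.sum_comp (Equiv.addLeft (f i)) fun z => single z (1 : R)
  simp only [Finset.sum_mul, htranslate, Finset.sum_const, Finset.card_univ, Nat.cast_smul_eq_nsmul]

lemma sum_single_pow_mul_sum_univ [AddCommGroup G] [Fintype G] [CommSemiring R] (f : ι → G)
    (k : ℕ) :
    (∑ i, single (f i) (1 : R)) ^ k * ∑ z, single z (1 : R) =
      (Fintype.card ι : R) ^ k • ∑ z, single z (1 : R) := by
  induction k with
  | zero => simp
  | succ k ih =>
    rw [pow_succ, mul_assoc, sum_single_mul_sum_univ, mul_smul_comm, ih, smul_smul, pow_succ']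

variable [AddCommGroup G] [Finite G] [Finite κ]

/-- In `𝔽_p[G]` the Frobenius turns `F = ∑ i, [f i]` into `∑ i, [p • f i] = F ^ p`, so multiplying
the tiling identity `F * ∑ j, [g j] = ∑ z, [z]` by `F ^ (p - 1)` and applying Fermat's little
theorem gives the identity for `p • f`. -/
lemma bijective_prime_nsmul_add {p : ℕ} (hp : p.Prime) (hpι : ¬ p ∣ Fintype.card ι) {f : ι → G}
    {g : κ → G} (h : Function.Bijective fun x : ι × κ => f x.1 + g x.2) :
    Function.Bijective fun x : ι × κ => p • f x.1 + g x.2 := by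
  have : Fact p.Prime := ⟨hp⟩
  have := Fintype.ofFinite G
  have := Fintype.ofFinite κ
  have : CharP (AddMonoidAlgebra (ZMod p) G) p :=
    charP_of_injective_algebraMap (algebraMap (ZMod p) (AddMonoidAlgebra (ZMod p) G)).injective p
  have hι : (Fintype.card ι : ZMod p) ≠ 0 := by rwa [Ne, ZMod.natCast_eq_zero_iff]
  have htile : (∑ i, single (f i) (1 : ZMod p)) * ∑ j, single (g j) 1 = ∑ z, single z 1 := by
    rw [sum_single_mul_sum_single]
    exact h.sum_comp fun z => single z (1 : ZMod p)
  have hfrob : (∑ i, single (f i) (1 : ZMod p)) ^ p = ∑ i, single (p • f i) 1 := by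
    simp only [sum_pow_char p, single_pow, one_pow]
  refine (Fintype.bijective_iff_surjective_and_card _).2
    ⟨surjective_of_sum_single_eq_sum_single (R := ZMod p) ?_, Fintype.card_of_bijective h⟩
  calc ∑ x : ι × κ, single (p • f x.1 + g x.2) (1 : ZMod p)
      = (∑ i, single (f i) 1) ^ p * ∑ j, single (g j) 1 := by
        rw [hfrob, sum_single_mul_sum_single (fun i => p • f i)]
    _ = (∑ i, single (f i) 1) ^ (p - 1) * ∑ z, single z 1 := by
        rw [← htile, ← mul_assoc, ← pow_succ, Nat.sub_add_cancel hp.one_le]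
    _ = ∑ z, single z 1 := by
        rw [sum_single_pow_mul_sum_univ, ZMod.pow_card_sub_one_eq_one hι, one_smul]

lemma bijective_nsmul_add {k : ℕ} (hk : k.Coprime (Fintype.card ι)) {f : ι → G} {g : κ → G}
    (h : Function.Bijective fun x : ι × κ => f x.1 + g x.2) :
    Function.Bijective fun x : ι × κ => k • f x.1 + g x.2 := by
  induction k using induction_on_primes generalizing f with
  | zero =>
    obtain ⟨i, hi⟩ := Fintype.card_eq_one_iff.1 (Nat.coprime_zero_left _ |>.1 hk)
    convert (Equiv.addLeft (-f i)).bijective.comp h using 2 with x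
    simp [hi x.1]
  | one => simpa using h
  | prime_mul p k hp ih =>
    have hpι : ¬ p ∣ Fintype.card ι := hp.coprime_iff_not_dvd.1 hk.coprime_mul_right
    simpa [mul_nsmul'] using
      bijective_prime_nsmul_add (f := fun i => k • f i) hp hpι (ih hk.coprime_mul_left h)

end Tijdeman

section Sands

variable {M : ℕ} {A B : Set (ZMod M)}

lemma IsTiling.bijective_add (h : IsTiling M A B) :
    Function.Bijective fun x : A × B => (x.1 : ZMod M) + x.2 := by
  refine (Function.bijective_iff_existsUnique _).2 fun z => ?_
  obtain ⟨⟨a, b⟩, ⟨ha, hb, hab⟩, huniq⟩ := h z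
  refine ⟨(⟨a, ha⟩, ⟨b, hb⟩), hab, fun x hx => ?_⟩
  have := huniq (x.1, x.2) ⟨x.1.2, x.2.2, hx⟩
  ext <;> simp_all

lemma IsTiling.eq_of_associated_sub [NeZero M] (h : IsTiling M A B) {a a' b b' : ZMod M}
    (ha : a ∈ A) (ha' : a' ∈ A) (hb : b ∈ B) (hb' : b' ∈ B)
    (hassoc : Associated (a - a') (b - b')) : b = b' := by
  classical
  obtain ⟨u, hu⟩ := hassoc
  have := Fintype.ofFinite A
  have := Fintype.ofFinite B
  have hcard : Fintype.card A ∣ M := by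
    have := Fintype.card_of_bijective h.bijective_add
    rw [Fintype.card_prod, ZMod.card] at this
    exact Dvd.intro _ this
  have hk : (u : ZMod M).val.Coprime (Fintype.card A) :=
    (ZMod.val_coe_unit_coprime u).coprime_dvd_right hcard
  have hinj := (bijective_nsmul_add hk h.bijective_add).injective
  have heq : ((⟨a, ha⟩, ⟨b', hb'⟩) : A × B) = (⟨a', ha'⟩, ⟨b, hb⟩) := hinj <| by
    simp only [nsmul_eq_mul, ZMod.natCast_zmod_val]
    linear_combination hu
  exact (congrArg (fun x : A × B => (x.2 : ZMod M)) heq).symm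

end Sands

section Divisibility

variable {M : ℕ}

lemma zmod_natCast_dvd_natCast_iff {d : ℕ} (hd : d ∣ M) (m : ℕ) :
    (d : ZMod M) ∣ m ↔ d ∣ m := by
  refine ⟨fun ⟨c, hc⟩ => ?_, fun h => Nat.cast_dvd_cast h⟩
  obtain ⟨k, rfl⟩ := ZMod.intCast_surjective c
  have hmod : (m : ℤ) ≡ d * k [ZMOD d] :=
    ((ZMod.intCast_eq_intCast_iff _ _ M).1 (by simpa using hc)).of_dvd (by exact_mod_cast hd)
  exact_mod_cast hmod.dvd_iff.2 (dvd_mul_right _ _)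

lemma associated_of_forall_dvd_iff {x y : ZMod M}
    (h : ∀ d : ℕ, d ∣ M → ((d : ZMod M) ∣ x ↔ (d : ZMod M) ∣ y)) : Associated x y := by
  obtain ⟨d, hd, u, hu, rfl⟩ := ZMod.eq_unit_mul_divisor x
  obtain ⟨e, he, v, hv, rfl⟩ := ZMod.eq_unit_mul_divisor y
  have hde : d ∣ e := (zmod_natCast_dvd_natCast_iff hd e).1 <| by
    simpa [hv.dvd_mul_left] using h d hd
  have hed : e ∣ d := (zmod_natCast_dvd_natCast_iff he d).1 <| by
    simpa [hu.dvd_mul_left] using h e he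
  rw [Nat.dvd_antisymm hde hed]
  exact (associated_isUnit_mul_left_iff hu).2 ((associated_isUnit_mul_right_iff hv).2 .rfl)

lemma pow_dvd_or_dvd_div {p n e : ℕ} (hp : p.Prime) (hpn : p ^ n ∣ M) (he : e ∣ M) :
    p ^ n ∣ e ∨ e ∣ M / p := by
  obtain ⟨k, rfl⟩ := he
  rcases (Nat.coprime_or_dvd_of_prime hp k) with hk | ⟨l, rfl⟩
  · exact .inl ((hk.pow_left n).dvd_of_dvd_mul_right hpn)
  · refine .inr ⟨l, Nat.div_eq_of_eq_mul_left hp.pos (by ring)⟩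

lemma associated_of_dvd_sub {p n : ℕ} (hp : p.Prime) (hpn : p ^ n ∣ M) {x y : ZMod M}
    (hxy : ((M / p : ℕ) : ZMod M) ∣ x - y) (hx : ¬ ((p ^ n : ℕ) : ZMod M) ∣ x)
    (hy : ¬ ((p ^ n : ℕ) : ZMod M) ∣ y) : Associated x y := by
  refine associated_of_forall_dvd_iff fun e he => ?_
  rcases pow_dvd_or_dvd_div hp hpn he with h | h
  · have h' : ((p ^ n : ℕ) : ZMod M) ∣ e := Nat.cast_dvd_cast h
    exact iff_of_false (fun hex => hx (h'.trans hex)) fun hey => hy (h'.trans hey)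
  · exact dvd_iff_dvd_of_dvd_sub ((Nat.cast_dvd_cast h).trans hxy)

lemma gcd_val_eq_div [NeZero M] {p : ℕ} (hp : p.Prime) (hpM : p ∣ M) {x : ZMod M} (hx : x ≠ 0)
    (h : ((M / p : ℕ) : ZMod M) ∣ x) : x.val.gcd M = M / p := by
  have hdvd : M / p ∣ x.val :=
    (zmod_natCast_dvd_natCast_iff (Nat.div_dvd_of_dvd hpM) _).1 (by simpa using h)
  have hval : x.val.gcd M ≠ M := fun hgcd =>
    hx <| (ZMod.val_eq_zero x).1 <|
      Nat.eq_zero_of_dvd_of_lt (Nat.gcd_eq_right_iff_dvd.1 hgcd) x.val_lt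
  obtain ⟨k, hk⟩ := Nat.dvd_gcd hdvd (Nat.div_dvd_of_dvd hpM)
  have hpos : 0 < M / p := Nat.div_pos (Nat.le_of_dvd (NeZero.pos M) hpM) hp.pos
  have hkp : k ∣ p := by
    refine Nat.dvd_of_mul_dvd_mul_left hpos ?_
    rw [← hk, Nat.div_mul_cancel hpM]
    exact Nat.gcd_dvd_right _ _
  rcases (Nat.dvd_prime hp).1 hkp with rfl | rfl
  · simpa using hk
  · exact absurd (hk.trans (Nat.div_mul_cancel hpM)) hval

lemma gridSet_eq_of_mem {D : ℕ} {x y : ZMod M} (h : y ∈ gridSet M x D) :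
    gridSet M y D = gridSet M x D := by
  ext z
  exact dvd_iff_dvd_of_dvd_sub (by simpa using (dvd_neg.2 h))

end Divisibility

section GridCoordinates

open Function

variable {M p n : ℕ}

/-- The parametrization of the `M`-fiber in the `p` direction through `0` by `ZMod p`. -/
def fiberHom (hp : p ∣ M) : ZMod p →+ ZMod M :=
  ZMod.lift p ⟨zmultiplesHom (ZMod M) ((M / p : ℕ) : ZMod M), by
    simp [← Nat.cast_mul, Nat.mul_div_cancel' hp]⟩

lemma fiberHom_castHom (hp : p ∣ M) (y : ZMod M) :
    fiberHom hp (ZMod.castHom hp (ZMod p) y) = y * (M / p : ℕ) := by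
  obtain ⟨m, rfl⟩ := ZMod.intCast_surjective y
  simp [fiberHom]

lemma div_dvd_fiberHom (hp : p ∣ M) (c : ZMod p) : ((M / p : ℕ) : ZMod M) ∣ fiberHom hp c := by
  obtain ⟨y, rfl⟩ := ZMod.castHom_surjective hp c
  exact fiberHom_castHom hp y ▸ dvd_mul_left _ _

lemma pow_dvd_fiberHom_iff (hprime : p.Prime) (hp : p ∣ M) (hn : p ^ n ∣ M)
    (hn' : ¬ p ^ (n + 1) ∣ M) {c : ZMod p} :
    ((p ^ n : ℕ) : ZMod M) ∣ fiberHom hp c ↔ c = 0 := by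
  refine ⟨fun h => ?_, fun h => by simp [h]⟩
  have : NeZero p := ⟨hprime.ne_zero⟩
  obtain ⟨m, rfl⟩ := ZMod.natCast_zmod_surjective c
  rw [← map_natCast (ZMod.castHom hp (ZMod p)) m, fiberHom_castHom, ← Nat.cast_mul,
    zmod_natCast_dvd_natCast_iff hn] at h
  rw [ZMod.natCast_eq_zero_iff]
  refine (Nat.coprime_or_dvd_of_prime hprime m).resolve_left fun hm => hn' ?_
  rw [pow_succ, ← Nat.div_mul_cancel hp]
  exact mul_dvd_mul_right ((hm.pow_left n).dvd_of_dvd_mul_left h) p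

variable {ι : Type*} {p : ι → ℕ}

lemma prod_dvd_of_pairwise_coprime (hcop : Pairwise (Nat.Coprime on p)) (hp : ∀ i, p i ∣ M)
    (T : Finset ι) : ∏ i ∈ T, p i ∣ M :=
  T.prod_dvd_of_isRelPrime (fun _ _ _ _ hij => Nat.coprime_iff_isRelPrime.1 (hcop hij))
    fun i _ => hp i

lemma div_eq_div_prod_mul_prod_sdiff [DecidableEq ι] {T : Finset ι} (hT : ∏ i ∈ T, p i ∣ M)
    {i : ι} (hi : i ∈ T) : M / p i = M / (∏ j ∈ T, p j) * ∏ j ∈ T \ {i}, p j := by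
  rcases (p i).eq_zero_or_pos with h0 | hpos
  · simp [h0, Finset.prod_eq_zero hi h0]
  · refine Nat.div_eq_of_eq_mul_left hpos ?_
    rw [mul_assoc, Finset.sdiff_singleton_eq_erase, Finset.prod_erase_mul _ _ hi,
      Nat.div_mul_cancel hT]

variable [Fintype ι]

/-- The parametrization of the grid `Λ(0, M / ∏ i, p i)` by `∏ i, ZMod (p i)`; the coordinate `i`
moves along the fibers in the `p i` direction. -/
def gridHom (hp : ∀ i, p i ∣ M) : (∀ i, ZMod (p i)) →+ ZMod M :=
  ∑ i, (fiberHom (hp i)).comp (Pi.evalAddMonoidHom _ i)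

lemma gridHom_apply (hp : ∀ i, p i ∣ M) (c : ∀ i, ZMod (p i)) :
    gridHom hp c = ∑ i, fiberHom (hp i) (c i) := by
  simp [gridHom]

lemma div_prod_dvd_iff_exists_gridHom_eq (hcop : Pairwise (Nat.Coprime on p)) (hp : ∀ i, p i ∣ M)
    {T : Finset ι} (hT : T.Nonempty) {z : ZMod M} :
    ((M / ∏ i ∈ T, p i : ℕ) : ZMod M) ∣ z ↔ ∃ c, (∀ i ∉ T, c i = 0) ∧ gridHom hp c = z := by
  classical
  have hdiv {i} (hi : i ∈ T) : M / p i = M / (∏ j ∈ T, p j) * ∏ j ∈ T \ {i}, p j :=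
    div_eq_div_prod_mul_prod_sdiff (prod_dvd_of_pairwise_coprime hcop hp T) hi
  constructor
  · rintro ⟨y, rfl⟩
    obtain ⟨μ, hμ⟩ : ∃ μ : ι → ℤ, ∑ i ∈ T, μ i * ∏ j ∈ T \ {i}, (p j : ℤ) = 1 :=
      (exists_sum_eq_one_iff_pairwise_coprime hT).2 fun i j hij =>
        Nat.isCoprime_iff_coprime.2 (hcop (Subtype.coe_ne_coe.2 hij))
    have hbezout : ∑ i ∈ T, (μ i : ZMod M) * ∏ j ∈ T \ {i}, (p j : ZMod M) = 1 := by
      exact_mod_cast congrArg (Int.cast : ℤ → ZMod M) hμ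
    refine ⟨fun i => if i ∈ T then ZMod.castHom (hp i) _ (μ i * y) else 0,
      by simp +contextual, ?_⟩
    calc gridHom hp _
        = ∑ i ∈ T, μ i * y * (M / p i : ℕ) := by
          simp only [gridHom_apply, apply_ite, map_zero, fiberHom_castHom, Finset.sum_ite_mem,
            Finset.univ_inter]
      _ = ∑ i ∈ T, (M / ∏ j ∈ T, p j : ℕ) * y * (μ i * ∏ j ∈ T \ {i}, (p j : ZMod M)) := by
          refine Finset.sum_congr rfl fun i hi => ?_
          rw [hdiv hi]
          push_cast
          ring
      _ = (M / ∏ j ∈ T, p j : ℕ) * y := by rw [← Finset.mul_sum, hbezout, mul_one]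
  · rintro ⟨c, hc, rfl⟩
    rw [gridHom_apply]
    refine Finset.dvd_sum fun i _ => ?_
    by_cases hi : i ∈ T
    · exact (Nat.cast_dvd_cast (hdiv hi ▸ dvd_mul_right _ _)).trans (div_dvd_fiberHom _ _)
    · simp [hc i hi]

end GridCoordinates

section PrimeFactorization

open Function

variable {ι : Type*} [Fintype ι] {p n : ι → ℕ} {M : ℕ}

/-- `M = ∏ i, p i ^ n i` is the factorization of `M` into powers of distinct primes, all with
positive exponents. -/
structure IsPrimeFactorization (M : ℕ) (p n : ι → ℕ) : Prop where
  prime : ∀ i, (p i).Prime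
  injective : Injective p
  one_le : ∀ i, 1 ≤ n i
  eq_prod : M = ∏ i, p i ^ n i

namespace IsPrimeFactorization

lemma ne_zero (h : IsPrimeFactorization M p n) : M ≠ 0 :=
  h.eq_prod ▸ Finset.prod_ne_zero_iff.2 fun i _ => pow_ne_zero _ (h.prime i).ne_zero

lemma pow_dvd (h : IsPrimeFactorization M p n) (i : ι) : p i ^ n i ∣ M :=
  h.eq_prod ▸ Finset.dvd_prod_of_mem _ (Finset.mem_univ i)

lemma dvd (h : IsPrimeFactorization M p n) (i : ι) : p i ∣ M :=
  (dvd_pow_self _ (Nat.one_le_iff_ne_zero.1 (h.one_le i))).trans (h.pow_dvd i)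

lemma pairwise_coprime (h : IsPrimeFactorization M p n) : Pairwise (Nat.Coprime on p) :=
  fun i j hij => (Nat.coprime_primes (h.prime i) (h.prime j)).2 (h.injective.ne hij)

lemma not_pow_succ_dvd (h : IsPrimeFactorization M p n) (j : ι) : ¬ p j ^ (n j + 1) ∣ M := by
  classical
  rw [h.eq_prod, ← Finset.mul_prod_erase _ _ (Finset.mem_univ j), pow_succ,
    mul_dvd_mul_iff_left (pow_ne_zero _ (h.prime j).ne_zero), (h.prime j).prime.dvd_finsetProd_iff]
  rintro ⟨i, hi, hdvd⟩
  exact (h.prime j).coprime_iff_not_dvd.1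
    ((h.pairwise_coprime (Finset.ne_of_mem_erase hi).symm).pow_right _) hdvd

lemma div_prod_eq (h : IsPrimeFactorization M p n) :
    M / ∏ i, p i = ∏ i, p i ^ (n i - 1) := by
  refine Nat.div_eq_of_eq_mul_left (Finset.prod_pos fun i _ => (h.prime i).pos) ?_
  rw [h.eq_prod, ← Finset.prod_mul_distrib]
  exact Finset.prod_congr rfl fun i _ =>
    (pow_sub_one_mul (Nat.one_le_iff_ne_zero.1 (h.one_le i)) _).symm

lemma pow_dvd_gridHom_iff (h : IsPrimeFactorization M p n) {c : ∀ i, ZMod (p i)} (j : ι) :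
    ((p j ^ n j : ℕ) : ZMod M) ∣ gridHom h.dvd c ↔ c j = 0 := by
  classical
  have hrest : ((p j ^ n j : ℕ) : ZMod M) ∣
      ∑ i ∈ Finset.univ.erase j, fiberHom (h.dvd i) (c i) := by
    refine Finset.dvd_sum fun i hi => ?_
    have hcop : (p i).Coprime (p j ^ n j) :=
      (h.pairwise_coprime (Finset.ne_of_mem_erase hi)).pow_right _
    have hdvd : p j ^ n j ∣ M / p i :=
      Nat.dvd_div_of_mul_dvd (hcop.mul_dvd_of_dvd_of_dvd (h.dvd i) (h.pow_dvd j))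
    exact (Nat.cast_dvd_cast hdvd).trans (div_dvd_fiberHom (h.dvd i) _)
  rw [gridHom_apply, ← Finset.add_sum_erase _ _ (Finset.mem_univ j), dvd_add_left hrest]
  exact pow_dvd_fiberHom_iff (h.prime j) (h.dvd j) (h.pow_dvd j) (h.not_pow_succ_dvd j)

/-- The parametrization of the `D(M)`-grid through `x` by `∏ i, ZMod (p i)`, turning the fibers
in the `p i` direction into the lines in direction `i`. -/
def gridPoint (h : IsPrimeFactorization M p n) (x : ZMod M) (c : ∀ i, ZMod (p i)) : ZMod M :=
  x + gridHom h.dvd c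

lemma gridPoint_sub_gridPoint (h : IsPrimeFactorization M p n) (x : ZMod M)
    (c c' : ∀ i, ZMod (p i)) :
    h.gridPoint x c - h.gridPoint x c' = gridHom h.dvd (c - c') := by
  simp [gridPoint]

lemma pow_dvd_gridPoint_sub_iff (h : IsPrimeFactorization M p n) (x : ZMod M)
    {c c' : ∀ i, ZMod (p i)} (i : ι) :
    ((p i ^ n i : ℕ) : ZMod M) ∣ h.gridPoint x c - h.gridPoint x c' ↔ c i = c' i := by
  rw [gridPoint_sub_gridPoint, h.pow_dvd_gridHom_iff, Pi.sub_apply, sub_eq_zero]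

lemma gridPoint_injective (h : IsPrimeFactorization M p n) (x : ZMod M) :
    Injective (h.gridPoint x) :=
  fun c c' hcc' => funext fun i => (h.pow_dvd_gridPoint_sub_iff x i).1 (by simp [hcc'])

lemma gridSet_gridPoint (h : IsPrimeFactorization M p n) (x : ZMod M) (c : ∀ i, ZMod (p i))
    {T : Finset ι} (hT : T.Nonempty) :
    gridSet M (h.gridPoint x c) (M / ∏ i ∈ T, p i) = h.gridPoint x '' coordFlat T c := by
  ext y
  refine (div_prod_dvd_iff_exists_gridHom_eq h.pairwise_coprime h.dvd hT).trans ⟨?_, ?_⟩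
  · rintro ⟨t, ht, hty⟩
    refine ⟨c + t, fun i hi => by simp [ht i hi], ?_⟩
    rw [← sub_left_inj (a := h.gridPoint x c), gridPoint_sub_gridPoint, add_sub_cancel_left, hty]
  · rintro ⟨c', hc', rfl⟩
    exact ⟨c' - c, fun i hi => sub_eq_zero.2 (hc' i hi), (h.gridPoint_sub_gridPoint x c' c).symm⟩

lemma gridSet_gridPoint_fiber (h : IsPrimeFactorization M p n) (x : ZMod M)
    (c : ∀ i, ZMod (p i)) (i : ι) :
    gridSet M (h.gridPoint x c) (M / p i) = h.gridPoint x '' coordFlat {i} c := by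
  simpa using h.gridSet_gridPoint x c (Finset.singleton_nonempty i)

lemma gridSet_gridPoint_plane (h : IsPrimeFactorization M p n) (x : ZMod M)
    (c : ∀ i, ZMod (p i)) {i j : ι} (hij : i ≠ j) :
    gridSet M (h.gridPoint x c) (M / (p i * p j)) = h.gridPoint x '' coordFlat {i, j} c := by
  classical
  simpa [Finset.prod_pair hij] using h.gridSet_gridPoint x c (Finset.insert_nonempty i {j})

lemma gridSet_eq_range_gridPoint [Nonempty ι] (h : IsPrimeFactorization M p n) (x : ZMod M)
    (c : ∀ i, ZMod (p i)) :
    gridSet M (h.gridPoint x c) (∏ i, p i ^ (n i - 1)) = Set.range (h.gridPoint x) := by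
  rw [← h.div_prod_eq, h.gridSet_gridPoint x c Finset.univ_nonempty, ← Set.image_univ]
  congr
  simp [coordFlat]

lemma mem_range_gridPoint [Nonempty ι] (h : IsPrimeFactorization M p n) (x : ZMod M) {a : ZMod M}
    (ha : ∀ i, ∃ c, ((p i ^ n i : ℕ) : ZMod M) ∣ a - h.gridPoint x c) :
    a ∈ Set.range (h.gridPoint x) := by
  rw [← h.gridSet_eq_range_gridPoint x 0]
  change ((∏ i, p i ^ (n i - 1) : ℕ) : ZMod M) ∣ _
  rw [Nat.cast_prod]
  refine Fintype.prod_dvd_of_coprime (fun i j hij => ((h.pairwise_coprime hij).pow _ _).cast)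
    fun i => ?_
  obtain ⟨c, hc⟩ := ha i
  have hgrid : ((∏ i, p i ^ (n i - 1) : ℕ) : ZMod M) ∣ h.gridPoint x c - h.gridPoint x 0 :=
    (h.gridSet_eq_range_gridPoint x 0).symm.subset ⟨c, rfl⟩
  have hpow : ((p i ^ (n i - 1) : ℕ) : ZMod M) ∣ (p i ^ n i : ℕ) :=
    Nat.cast_dvd_cast (pow_dvd_pow _ (Nat.sub_le _ _))
  have hprod : ((p i ^ (n i - 1) : ℕ) : ZMod M) ∣ (∏ i, p i ^ (n i - 1) : ℕ) :=
    Nat.cast_dvd_cast (Finset.dvd_prod_of_mem _ (Finset.mem_univ i))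
  simpa only [sub_add_sub_cancel] using dvd_add (hpow.trans hc) (hprod.trans hgrid)

lemma fibered_image_gridPoint_iff (h : IsPrimeFactorization M p n) (x : ZMod M)
    {S : Set (∀ i, ZMod (p i))} {i : ι} :
    Fibered M (p i) (h.gridPoint x '' S) ↔ LineClosed i S := by
  simp only [Fibered, LineClosed, Set.forall_mem_image, gridSet_gridPoint_fiber,
    Set.image_subset_image_iff (h.gridPoint_injective x)]

lemma inter_gridSet_gridPoint_plane (h : IsPrimeFactorization M p n) (x : ZMod M)
    (A : Set (ZMod M)) (c : ∀ i, ZMod (p i)) {i j : ι} (hij : i ≠ j) :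
    A ∩ gridSet M (h.gridPoint x c) (M / (p i * p j)) =
      h.gridPoint x '' (h.gridPoint x ⁻¹' A ∩ coordFlat {i, j} c) := by
  rw [h.gridSet_gridPoint_plane x c hij, Set.image_preimage_inter]

lemma exists_isLineFibering [Nonempty ι] (h : IsPrimeFactorization M p n) (x : ZMod M)
    {S : Set (∀ i, ZMod (p i))} {F : Set (Set (ZMod M))}
    (hF : ∀ f ∈ F, ∃ i y, f = gridSet M y (M / p i)) (hdisj : F.PairwiseDisjoint id)
    (hU : ⋃₀ F = h.gridPoint x '' S) : ∃ d, IsLineFibering S d := by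
  have (i : ι) : Fact (p i).Prime := ⟨h.prime i⟩
  have hcover (c) (hc : c ∈ S) : ∃ i, h.gridPoint x '' coordFlat {i} c ∈ F := by
    obtain ⟨f, hf, hcf⟩ : h.gridPoint x c ∈ ⋃₀ F := hU ▸ Set.mem_image_of_mem _ hc
    obtain ⟨i, y, rfl⟩ := hF f hf
    exact ⟨i, by rwa [← h.gridSet_gridPoint_fiber, gridSet_eq_of_mem hcf]⟩
  choose! d hd using hcover
  have hline (c) (hc : c ∈ S) : coordFlat {d c} c ⊆ S :=
    (Set.image_subset_image_iff (h.gridPoint_injective x)).1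
      (hU ▸ Set.subset_sUnion_of_mem (hd c hc))
  refine ⟨d, hline, fun c hc c' hc' => ?_⟩
  have heq : h.gridPoint x '' coordFlat {d c'} c' = h.gridPoint x '' coordFlat {d c} c :=
    hdisj.elim_set (hd c' (hline c hc hc')) (hd c hc) (h.gridPoint x c')
      (Set.mem_image_of_mem _ (self_mem_coordFlat _ c')) (Set.mem_image_of_mem _ hc')
  exact eq_of_coordFlat_singleton_eq ((h.gridPoint_injective x).image_injective heq)

lemma extCorner (h : IsPrimeFactorization M p n) (x : ZMod M) {A : Set (ZMod M)}
    {i j k : ι} (hij : i ≠ j) {a a' : ∀ i, ZMod (p i)} (ha : h.gridPoint x a ∈ A)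
    (ha' : h.gridPoint x a' ∈ A) (haa' : a' ∈ coordFlat {k} a)
    (hai : LineClosed i (h.gridPoint x ⁻¹' A ∩ coordFlat {i, j} a))
    (haj : ¬ LineClosed j (h.gridPoint x ⁻¹' A ∩ coordFlat {i, j} a))
    (haj' : LineClosed j (h.gridPoint x ⁻¹' A ∩ coordFlat {i, j} a'))
    (hai' : ¬ LineClosed i (h.gridPoint x ⁻¹' A ∩ coordFlat {i, j} a')) :
    ExtCorner M (p k) (p i) (p j) A (Set.range (h.gridPoint x)) := by
  have : NeZero M := ⟨h.ne_zero⟩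
  have hne : h.gridPoint x a - h.gridPoint x a' ≠ 0 := fun hsub => by
    rw [h.gridPoint_injective x (sub_eq_zero.1 hsub)] at hai
    exact hai' hai
  have hdvd : ((M / p k : ℕ) : ZMod M) ∣ h.gridPoint x a - h.gridPoint x a' := by
    rw [dvd_sub_comm]
    exact (h.gridSet_gridPoint_fiber x a k).symm.subset ⟨a', haa', rfl⟩
  refine ⟨_, ⟨ha, a, rfl⟩, _, ⟨ha', a', rfl⟩, gcd_val_eq_div (h.prime k) (h.dvd k) hne hdvd, ?_⟩
  simp only [h.inter_gridSet_gridPoint_plane x A _ hij, h.fibered_image_gridPoint_iff]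
  exact ⟨hai, haj, haj', hai'⟩

end IsPrimeFactorization

lemma isPrimeFactorization_three {p₀ p₁ p₂ n₀ n₁ n₂ : ℕ} (hp₀ : p₀.Prime) (hp₁ : p₁.Prime)
    (hp₂ : p₂.Prime) (h₀₁ : p₀ ≠ p₁) (h₀₂ : p₀ ≠ p₂) (h₁₂ : p₁ ≠ p₂) (hn₀ : 1 ≤ n₀)
    (hn₁ : 1 ≤ n₁) (hn₂ : 1 ≤ n₂) :
    IsPrimeFactorization (p₀ ^ n₀ * p₁ ^ n₁ * p₂ ^ n₂) ![p₀, p₁, p₂] ![n₀, n₁, n₂] where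
  prime := by simp [Fin.forall_fin_succ, hp₀, hp₁, hp₂]
  injective := by
    simp [Injective, Fin.forall_fin_succ, h₀₁, h₀₂, h₁₂, h₀₁.symm, h₀₂.symm, h₁₂.symm]
  one_le := by simp [Fin.forall_fin_succ, hn₀, hn₁, hn₂]
  eq_prod := by simp [Fin.prod_univ_three]

end PrimeFactorization

section ThreeDirections

open Function

variable {M : ℕ} {A B : Set (ZMod M)}

lemma IsTiling.exists_add_eq (htile : IsTiling M A B) (z : ZMod M) :
    ∃ a ∈ A, ∃ b ∈ B, a + b = z := by
  obtain ⟨⟨a, b⟩, ⟨ha, hb, hab⟩, -⟩ := htile z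
  exact ⟨a, ha, b, hb, hab⟩

lemma IsTiling.exists_sub_eq_sub (htile : IsTiling M A B) {w : ZMod M} (hw : w ∉ A) :
    ∃ a ∈ A, ∃ b ∈ B, ∃ b' ∈ B, b ≠ b' ∧ a - w = b - b' := by
  obtain ⟨-, -, b, hb, -⟩ := htile.exists_add_eq 0
  obtain ⟨a, ha, b', hb', hsum⟩ := htile.exists_add_eq (w + b)
  refine ⟨a, ha, b, hb, b', hb', ?_, by linear_combination hsum⟩
  rintro rfl
  exact hw (add_right_cancel hsum ▸ ha)

lemma IsTiling.pow_dvd_sub_or_pow_dvd_sub [NeZero M] (htile : IsTiling M A B) {p n : ℕ}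
    (hp : p.Prime) (hn : p ^ n ∣ M) {a y w b b' : ZMod M} (ha : a ∈ A) (hy : y ∈ A)
    (hb : b ∈ B) (hb' : b' ∈ B) (hne : b ≠ b') (hab : a - w = b - b')
    (hyw : ((M / p : ℕ) : ZMod M) ∣ y - w) :
    ((p ^ n : ℕ) : ZMod M) ∣ a - w ∨ ((p ^ n : ℕ) : ZMod M) ∣ a - y := by
  by_contra! hndvd
  have hassoc : Associated (a - y) (a - w) :=
    associated_of_dvd_sub hp hn (by simpa [dvd_sub_comm] using hyw) hndvd.2 hndvd.1
  exact hne (htile.eq_of_associated_sub ha hy hb hb' (hab ▸ hassoc))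

variable {p n : Fin 3 → ℕ}

lemma IsTiling.exists_dir_ne (htile : IsTiling M A B) (h : IsPrimeFactorization M p n)
    (x₀ : ZMod M) {d : (∀ i, ZMod (p i)) → Fin 3}
    (hd : IsLineFibering (h.gridPoint x₀ ⁻¹' A) d) :
    ∃ k, ∀ c, h.gridPoint x₀ c ∈ A → d c ≠ k := by
  have : NeZero M := ⟨h.ne_zero⟩
  by_contra! hall
  choose x hx hdx using hall
  set w := pinwheelCenter x
  have hwA : h.gridPoint x₀ w ∉ A := hd.pinwheelCenter_notMem hx hdx
  obtain ⟨a, ha, b, hb, b', hb', hbb', hab⟩ := htile.exists_sub_eq_sub hwA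
  have hyw (i) : ((M / p i : ℕ) : ZMod M) ∣
      h.gridPoint x₀ (update w i (x (i + 1) i)) - h.gridPoint x₀ w :=
    (h.gridSet_gridPoint_fiber x₀ w i).symm.subset
      ⟨_, update_mem_coordFlat (Set.mem_singleton i) w _, rfl⟩
  have hdvd (i) : ((p i ^ n i : ℕ) : ZMod M) ∣ a - h.gridPoint x₀ w ∨
      ((p i ^ n i : ℕ) : ZMod M) ∣ a - h.gridPoint x₀ (update w i (x (i + 1) i)) :=
    htile.pow_dvd_sub_or_pow_dvd_sub (h.prime i) (h.pow_dvd i) ha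
      (hd.update_pinwheelCenter_mem hx hdx i) hb hb' hbb' hab (hyw i)
  obtain ⟨c, rfl⟩ : a ∈ Set.range (h.gridPoint x₀) :=
    h.mem_range_gridPoint x₀ fun i => (hdvd i).elim (fun hw => ⟨_, hw⟩) fun hy => ⟨_, hy⟩
  obtain ⟨i, hi⟩ : ∃ i, c i ≠ w i := ne_iff.1 fun hcw => hwA (hcw ▸ ha)
  have hci : c i = x (i + 1) i := by
    simpa only [h.pow_dvd_gridPoint_sub_iff, hi, false_or, update_self] using hdvd i
  obtain ⟨s, hs, s', hs', hss'⟩ := hd.exists_sub_eq_sub_pinwheelCenter hx hdx hci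
  have hdiff : h.gridPoint x₀ s - h.gridPoint x₀ s' = b - b' := by
    rw [← hab, h.gridPoint_sub_gridPoint, h.gridPoint_sub_gridPoint, hss']
  exact hbb' (htile.eq_of_associated_sub hs hs' hb hb' (hdiff ▸ .rfl))

end ThreeDirections

theorem statement12_general {M : ℕ} {p n : Fin 3 → ℕ} (h : IsPrimeFactorization M p n)
    {A B : Set (ZMod M)} (htile : IsTiling M A B) (x₀ : ZMod M) {F : Set (Set (ZMod M))}
    (hF : ∀ f ∈ F, ∃ i x, f = gridSet M x (M / p i)) (hdisj : F.PairwiseDisjoint id)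
    (hU : ⋃₀ F = A ∩ gridSet M x₀ (∏ i, p i ^ (n i - 1)))
    (hnf : ∀ i, ¬ Fibered M (p i) (A ∩ gridSet M x₀ (∏ i, p i ^ (n i - 1)))) :
    ∃ i, ExtCorner M (p i) (p (i + 1)) (p (i + 2)) A (gridSet M x₀ (∏ i, p i ^ (n i - 1))) := by
  have hgrid : gridSet M x₀ (∏ i, p i ^ (n i - 1)) = Set.range (h.gridPoint x₀) := by
    simpa [IsPrimeFactorization.gridPoint] using h.gridSet_eq_range_gridPoint x₀ 0
  rw [hgrid, ← Set.image_preimage_eq_inter_range] at hU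
  simp only [hgrid, ← Set.image_preimage_eq_inter_range, h.fibered_image_gridPoint_iff] at hnf ⊢
  obtain ⟨d, hd⟩ := h.exists_isLineFibering x₀ hF hdisj hU
  obtain ⟨k, hk⟩ := htile.exists_dir_ne h x₀ hd
  have hne : k + 1 ≠ k + 2 := by omega
  have hι (l) : l = k + 1 ∨ l = k + 2 ∨ l = k := by omega
  obtain ⟨a, ha, a', ha', haa', hai, haj, haj', hai'⟩ :=
    hd.exists_corner hne hι hk (hnf _) (hnf _)
  exact ⟨k, h.extCorner x₀ hne ha ha' haa' hai haj haj' hai'⟩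

/-- Let `M = p_i^{n_i} p_j^{n_j} p_k^{n_k}`, `A ⊕ B = ℤ_M`, `Φ_M | A`.
If `A ∩ Λ` (for a `D(M)`-grid `Λ`) is nonempty, is a union of pairwise disjoint `M`-fibers,
but is not `M`-fibered in any single direction, then `A ∩ Λ` contains a `p_ν` extended
corner for some `ν ∈ {i,j,k}`. -/
theorem statement12
    (pi pj pk : ℕ) (hpi : pi.Prime) (hpj : pj.Prime) (hpk : pk.Prime)
    (hij : pi ≠ pj) (hik : pi ≠ pk) (hjk : pj ≠ pk)
    (ni nj nk : ℕ) (hni : 1 ≤ ni) (hnj : 1 ≤ nj) (hnk : 1 ≤ nk)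
    (M : ℕ) (hM : M = pi ^ ni * pj ^ nj * pk ^ nk)
    (A B : Finset (ZMod M))
    (htile : IsTiling M (A : Set (ZMod M)) (B : Set (ZMod M)))
    (hPhiM : cycDvd M M A)
    (x0 : ZMod M) (D : ℕ) (hD : D = pi ^ (ni - 1) * pj ^ (nj - 1) * pk ^ (nk - 1))
    (hne : ((A : Set (ZMod M)) ∩ gridSet M x0 D).Nonempty)
    (hfib : ∃ F : Set (Set (ZMod M)),
      (∀ f ∈ F, ∃ x : ZMod M,
        f = gridSet M x (M / pi) ∨ f = gridSet M x (M / pj) ∨ f = gridSet M x (M / pk)) ∧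
      (∀ f ∈ F, ∀ g ∈ F, f ≠ g → Disjoint f g) ∧
      ⋃₀ F = (A : Set (ZMod M)) ∩ gridSet M x0 D)
    (hnfi : ¬ Fibered M pi ((A : Set (ZMod M)) ∩ gridSet M x0 D))
    (hnfj : ¬ Fibered M pj ((A : Set (ZMod M)) ∩ gridSet M x0 D))
    (hnfk : ¬ Fibered M pk ((A : Set (ZMod M)) ∩ gridSet M x0 D)) :
    ExtCorner M pi pj pk (A : Set (ZMod M)) (gridSet M x0 D) ∨
    ExtCorner M pj pk pi (A : Set (ZMod M)) (gridSet M x0 D) ∨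
    ExtCorner M pk pi pj (A : Set (ZMod M)) (gridSet M x0 D) := by
  obtain ⟨F, hF, hdisj, hU⟩ := hfib
  have h := isPrimeFactorization_three hpi hpj hpk hij hik hjk hni hnj hnk
  obtain rfl : D = ∏ i, ![pi, pj, pk] i ^ (![ni, nj, nk] i - 1) := by
    simp [Fin.prod_univ_three, hD]
  simpa [Fin.exists_fin_succ] using statement12_general (hM ▸ h) htile x0
    (fun f hf => by simpa [Fin.exists_fin_succ, exists_or] using hF f hf) hdisj hU
    (by simp [Fin.forall_fin_succ, hnfi, hnfj, hnfk])
end
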